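/- Let α ∈ (0,1), p > 1 real, c > 0, and let φ be a steady solution with speed c (for either nonlinearity, case abs or case sgn). Let U ⊆ ℝ be an open set such that n′(φ(x)) < c for every x ∈ U. (i) If in addition φ(x) ≠ 0 for every x ∈ U, then φ is infinitely differentiable on U. (ii) If p ≥ 2 is an integer and n(x) = x^p, then φ is infinitely differentiable on U (without assuming φ is nonvanishing on U). -/

import Mathlib

open Real MeasureTheory Set Filter Topology

/-- The periodic convolution kernel `K_α`: equal to the explicit integral
representation for `x ∉ 2πℤ` and to `0` on `2πℤ`. -/
noncomputable def Kker (α x : ℝ) : ℝ :=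
  letI : Decidable (∃ k : ℤ, x = 2 * π * k) := Classical.propDecidable _
  if ∃ k : ℤ, x = 2 * π * k then 0
  else (1 / (π * Real.Gamma α)) *
    ∫ t in Set.Ioi (0:ℝ),
      t ^ (α - 1) * (Real.exp t * Real.cos x - 1) /
        (1 - 2 * Real.exp t * Real.cos x + Real.exp (2 * t))

/-- A steady travelling-wave solution of speed `c` with nonlinearity `n`:
a continuous, `2π`-periodic, zero-mean function `φ` satisfying the steady
convolution equation. -/
def IsSteadySolution (α c : ℝ) (n φ : ℝ → ℝ) : Prop :=
  Continuous φ ∧ Function.Periodic φ (2 * π) ∧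
  (∫ y in (-π)..π, φ y) = 0 ∧
  ∀ x : ℝ, (∫ y in (-π)..π, Kker α (x - y) * φ y) =
    c * φ x - n (φ x) + (1 / (2 * π)) * ∫ y in (-π)..π, n (φ y)

/-- Case abs nonlinearity `n(x) = |x|^p`. -/
noncomputable def nAbs (p x : ℝ) : ℝ := |x| ^ p
/-- Case sgn nonlinearity `n(x) = x·|x|^(p-1)`. -/
noncomputable def nSgn (p x : ℝ) : ℝ := x * |x| ^ (p - 1)
/-- Derivative of the case abs nonlinearity, `n′(x) = p·x·|x|^(p-2)`. -/
noncomputable def nAbs' (p x : ℝ) : ℝ := p * x * |x| ^ (p - 2)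
/-- Derivative of the case sgn nonlinearity, `n′(x) = p·|x|^(p-1)`. -/
noncomputable def nSgn' (p x : ℝ) : ℝ := p * |x| ^ (p - 1)

/-! ### Kernel estimates -/

/-- The reduced integrand. -/
noncomputable def qk (t s : ℝ) : ℝ := (s - Real.exp (-t)) / (2 * (Real.cosh t - s))

/-- The kernel as a function of `s = cos x`. -/
noncomputable def Qk (α s : ℝ) : ℝ := ∫ t in Set.Ioi (0:ℝ), t ^ (α - 1) * qk t s

lemma cos_eq_one_iff_ex (x : ℝ) : (∃ k : ℤ, x = 2 * π * k) ↔ Real.cos x = 1 := by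
  rw [Real.cos_eq_one_iff]
  constructor
  · rintro ⟨k, hk⟩; exact ⟨k, by rw [hk]; ring⟩
  · rintro ⟨k, hk⟩; exact ⟨k, by rw [← hk]; ring⟩

lemma Kker_of_one {α x : ℝ} (hx : Real.cos x = 1) : Kker α x = 0 := by
  have := (cos_eq_one_iff_ex x).2 hx
  simp [Kker, this]

lemma Kker_of_ne {α x : ℝ} (hx : Real.cos x ≠ 1) :
    Kker α x = (1 / (π * Real.Gamma α)) * Qk α (Real.cos x) := by
  have : ¬ ∃ k : ℤ, x = 2 * π * k := fun h => hx ((cos_eq_one_iff_ex x).1 h)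
  unfold Kker
  rw [if_neg this]
  congr 1
  unfold Qk
  refine setIntegral_congr_fun measurableSet_Ioi fun t _ => ?_
  simp only [qk]
  rw [mul_div_assoc]
  congr 1
  have h2 : Real.exp (2 * t) = Real.exp t * Real.exp t := by rw [← Real.exp_add]; ring_nf
  have h3 : Real.exp t ≠ 0 := (Real.exp_pos t).ne'
  rw [Real.cosh_eq, h2, Real.exp_neg]
  have h4 : Real.exp t * (2 * ((Real.exp t + (Real.exp t)⁻¹) / 2 - Real.cos x)) =
     1 - 2 * Real.exp t * Real.cos x + Real.exp t * Real.exp t := by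
    field_simp; ring
  rw [← h4]
  have h5 : Real.exp t * Real.cos x - 1 = Real.exp t * (Real.cos x - (Real.exp t)⁻¹) := by
    field_simp
  rw [h5, mul_div_mul_left _ _ h3]

lemma Kker_periodic (α : ℝ) : Function.Periodic (Kker α) (2 * π) := by
  intro x
  by_cases h : Real.cos x = 1
  · rw [Kker_of_one h, Kker_of_one (by rwa [Real.cos_add_two_pi])]
  · rw [Kker_of_ne h, Kker_of_ne (by rwa [Real.cos_add_two_pi]), Real.cos_add_two_pi]

lemma half_exp_le_cosh (t : ℝ) : Real.exp t / 2 ≤ Real.cosh t := by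
  rw [Real.cosh_eq]; have := Real.exp_pos (-t); linarith

lemma cosh_half_sq (t : ℝ) : Real.cosh t = 2 * Real.cosh (t / 2) ^ 2 - 1 := by
  have := Real.cosh_two_mul (t / 2)
  have h2 := Real.cosh_sq (t / 2)
  rw [show 2 * (t / 2) = t by ring] at this
  linarith

lemma cosh_ge_half_sq (t : ℝ) : Real.cosh (t / 2) ^ 2 ≤ Real.cosh t := by
  rw [cosh_half_sq t]
  nlinarith [Real.one_le_cosh (t / 2)]

lemma cosh_sub_ge_one {t s : ℝ} (hs : -1 ≤ s) (hs1 : s ≤ 1) :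
    Real.cosh t * ((1 - s) / 2) ≤ Real.cosh t - s := by
  nlinarith [Real.one_le_cosh t]

lemma sinh_half_lower {u : ℝ} (hu : 0 ≤ u) : u * Real.cosh (u / 2) ≤ Real.sinh u := by
  have h := Real.sinh_two_mul (u / 2)
  rw [show 2 * (u / 2) = u by ring] at h
  have h1 : u / 2 ≤ Real.sinh (u / 2) := Real.self_le_sinh_iff.2 (by linarith)
  rw [h]
  nlinarith [Real.one_le_cosh (u / 2)]

lemma cosh_sub_ge_two {t s : ℝ} (ht : 0 ≤ t) (hs1 : s ≤ 1) :
    Real.cosh (t / 2) * (t ^ 2 / 4) ≤ Real.cosh t - s := by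
  have h1 := sinh_half_lower (u := t / 2) (by linarith)
  have h2 := cosh_half_sq t
  have h3 := cosh_half_sq (t / 2)
  have h4 := Real.cosh_sq (t / 2)
  have h5 : (t / 2 * Real.cosh (t / 2 / 2)) ^ 2 ≤ Real.sinh (t / 2) ^ 2 := by
    apply pow_le_pow_left₀ _ h1
    have := Real.cosh_pos (t / 2 / 2)
    positivity
  have h6 : Real.cosh (t / 2 / 2) ^ 2 = (Real.cosh (t / 2) + 1) / 2 := by linarith
  rw [mul_pow, h6] at h5
  nlinarith [sq_nonneg t]

lemma sinh_le_self_mul {t : ℝ} (ht : 0 ≤ t) : Real.sinh t ≤ t * Real.cosh (t / 2) ^ 2 := by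
  have h := Real.sinh_two_mul (t / 2)
  rw [show 2 * (t / 2) = t by ring] at h
  have key : Real.sinh (t / 2) ≤ t / 2 * Real.cosh (t / 2) := by
    have hmono : MonotoneOn (fun u : ℝ => u * Real.cosh u - Real.sinh u) (Set.Ici 0) := by
      apply monotoneOn_of_deriv_nonneg (convex_Ici 0)
      · fun_prop
      · fun_prop
      · intro x hx
        rw [interior_Ici] at hx
        have hd : HasDerivAt (fun u : ℝ => u * Real.cosh u - Real.sinh u)
            (1 * Real.cosh x + x * Real.sinh x - Real.cosh x) x :=
          ((hasDerivAt_id x).mul (Real.hasDerivAt_cosh x)).sub (Real.hasDerivAt_sinh x)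
        rw [hd.deriv]
        have : 0 ≤ Real.sinh x := Real.sinh_nonneg_iff.2 (le_of_lt hx)
        have hx' : (0:ℝ) < x := hx
        nlinarith [mul_nonneg hx'.le this]
    have := hmono (Set.mem_Ici.2 le_rfl) (Set.mem_Ici.2 (by linarith : (0:ℝ) ≤ t / 2))
      (by linarith)
    simp at this
    linarith
  rw [h]
  nlinarith [Real.one_le_cosh (t / 2)]

lemma geom_le_max {A B D θ : ℝ} (hA : 0 < A) (hB : 0 < B) (h1 : A ≤ D) (h2 : B ≤ D)
    (hθ0 : 0 ≤ θ) (hθ1 : θ ≤ 1) : A ^ θ * B ^ (1 - θ) ≤ D := by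
  have hD : 0 < D := lt_of_lt_of_le hA h1
  calc A ^ θ * B ^ (1 - θ) ≤ D ^ θ * D ^ (1 - θ) := by
        gcongr
    _ = D := by rw [← Real.rpow_add hD]; simp

lemma t_div_D_le {a t s : ℝ} (ha : 0 < a) (ha1 : a < 1) (ht : 0 < t) (hs : -1 ≤ s)
    (hs1 : s < 1) :
    t / (Real.cosh t - s) ≤
      8 * ((1 - s) / 2) ^ (-((1 - a) / 2)) * (t ^ (-a) * Real.exp (-(1/2) * t)) := by
  set θ := (1 - a) / 2 with hθ
  set A := (1 - s) / 2 with hA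
  have hA0 : 0 < A := by rw [hA]; linarith
  set c1 := Real.cosh (t / 2) with hc1
  have hc1p : 1 ≤ c1 := Real.one_le_cosh _
  have hD1 : c1 * A ≤ Real.cosh t - s := by
    refine le_trans ?_ (cosh_sub_ge_one hs hs1.le)
    gcongr
    have := cosh_ge_half_sq t
    nlinarith
  have hD2 : c1 * (t ^ 2 / 4) ≤ Real.cosh t - s := cosh_sub_ge_two ht.le hs1.le
  have hD : c1 * (A ^ θ * (t ^ 2 / 4) ^ (1 - θ)) ≤ Real.cosh t - s := by
    have h0 : A ^ θ * (t ^ 2 / 4) ^ (1 - θ) ≤ (Real.cosh t - s) / c1 := by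
      apply geom_le_max hA0 (by positivity)
      · rw [le_div_iff₀ (by linarith)]; linarith
      · rw [le_div_iff₀ (by linarith)]; linarith
      · rw [hθ]; linarith
      · rw [hθ]; linarith
    rw [le_div_iff₀ (by linarith)] at h0
    linarith
  have hc2 : Real.exp (t / 2) / 2 ≤ c1 := half_exp_le_cosh _
  have h4 : t ^ (1 + a) / 4 ≤ (t ^ 2 / 4) ^ (1 - θ) := by
    rw [Real.div_rpow (by positivity) (by norm_num), ← Real.rpow_natCast, ← Real.rpow_mul ht.le]
    have e1 : ((2:ℕ):ℝ) * (1 - θ) = 1 + a := by rw [hθ]; push_cast; ring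
    rw [e1]
    gcongr
    calc (4:ℝ) ^ (1 - θ) ≤ 4 ^ (1:ℝ) := by
          apply Real.rpow_le_rpow_of_exponent_le (by norm_num); rw [hθ]; linarith
      _ = 4 := by simp
  have hDD : Real.exp (t / 2) / 2 * (A ^ θ * (t ^ (1 + a) / 4)) ≤ Real.cosh t - s := by
    refine le_trans ?_ hD
    gcongr
  have hpos : 0 < Real.exp (t / 2) / 2 * (A ^ θ * (t ^ (1 + a) / 4)) := by positivity
  calc t / (Real.cosh t - s) ≤ t / (Real.exp (t / 2) / 2 * (A ^ θ * (t ^ (1 + a) / 4))) := by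
        gcongr
    _ = _ := by
        rw [Real.rpow_neg hA0.le, Real.rpow_neg ht.le, Real.rpow_add ht, Real.rpow_one,
          show -(1/2) * t = -(t / 2) by ring, Real.exp_neg]
        field_simp
        norm_num

/-- Common integrable majorant. -/
noncomputable def majk (α a t : ℝ) : ℝ :=
  t ^ (α - 1) * (2 * Real.exp (-t) + 4 * (t ^ (-a) * Real.exp (-(1/2) * t)))

lemma majk_integrable {α a : ℝ} (hα : 0 < α) (ha : a < α) :
    IntegrableOn (majk α a) (Set.Ioi 0) := by
  have h1 : IntegrableOn (fun t : ℝ => t ^ (α - 1) * Real.exp (-1 * t)) (Set.Ioi 0) :=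
    integrableOn_rpow_mul_exp_neg_mul_rpow (p := 1) (s := α - 1) (b := 1) (by linarith) (by norm_num) (by norm_num)
      |>.congr_fun (fun t _ => by simp) measurableSet_Ioi
  have h2 : IntegrableOn (fun t : ℝ => t ^ (α - a - 1) * Real.exp (-(1/2) * t)) (Set.Ioi 0) :=
    integrableOn_rpow_mul_exp_neg_mul_rpow (p := 1) (s := α - a - 1) (b := 1/2) (by linarith) (by norm_num)
      (by norm_num)
      |>.congr_fun (fun t _ => by simp) measurableSet_Ioi
  refine IntegrableOn.congr_fun ((h1.const_mul 2).add (h2.const_mul 4)) (fun t ht => ?_) measurableSet_Ioi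
  have ht' : (0:ℝ) < t := ht
  simp only [Pi.add_apply, majk]
  rw [show α - a - 1 = (α - 1) + (-a) by ring, Real.rpow_add ht']
  ring_nf

lemma qk_bound {a t s : ℝ} (ha : 0 < a) (ha1 : a < 1) (ht : 0 < t) (hs : -1 ≤ s)
    (hs1 : s < 1) :
    |qk t s| ≤ ((1 - s) / 2) ^ (-((1 - a) / 2)) *
      (2 * Real.exp (-t) + 4 * (t ^ (-a) * Real.exp (-(1/2) * t))) := by
  have hD0 : 0 < Real.cosh t - s := by have := Real.one_le_cosh t; linarith
  have h1 := t_div_D_le ha ha1 ht hs hs1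
  set W := ((1 - s) / 2) ^ (-((1 - a) / 2)) with hW
  have hW1 : 1 ≤ W := by
    apply Real.one_le_rpow_of_pos_of_le_one_of_nonpos <;> linarith
  have hnum : |s - Real.exp (-t)| ≤ (1 - s) + t := by
    have e1 : 1 - t ≤ Real.exp (-t) := by have := Real.add_one_le_exp (-t); linarith
    have e2 : Real.exp (-t) ≤ 1 := Real.exp_le_one_iff.2 (by linarith)
    rw [abs_le]; constructor <;> linarith
  have h2 : (1 - s) / (2 * (Real.cosh t - s)) ≤ 2 * Real.exp (-t) := by
    rw [div_le_iff₀ (by positivity)]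
    have e3 := cosh_sub_ge_one (t := t) hs hs1.le
    have e4 := half_exp_le_cosh t
    have e5 : Real.exp (-t) * Real.exp t = 1 := by rw [← Real.exp_add]; simp
    have e6 : Real.exp t / 2 * ((1 - s) / 2) ≤ Real.cosh t - s :=
      le_trans (mul_le_mul_of_nonneg_right e4 (by linarith)) e3
    have e7 := mul_le_mul_of_nonneg_left e6 (Real.exp_pos (-t)).le
    have e8 : Real.exp (-t) * (Real.exp t / 2 * ((1 - s) / 2)) = (1 - s) / 4 := by
      calc _ = (Real.exp (-t) * Real.exp t) * (1 - s) / 4 := by ring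
        _ = _ := by rw [e5]; ring
    linarith
  have hE := (Real.exp_pos (-t)).le
  calc |qk t s| = |s - Real.exp (-t)| / (2 * (Real.cosh t - s)) := by
        rw [qk, abs_div, abs_of_pos (by positivity : (0:ℝ) < 2 * (Real.cosh t - s))]
    _ ≤ ((1 - s) + t) / (2 * (Real.cosh t - s)) := by gcongr
    _ = (1 - s) / (2 * (Real.cosh t - s)) + (t / (Real.cosh t - s)) / 2 := by
        field_simp
    _ ≤ 2 * Real.exp (-t) + (8 * W * (t ^ (-a) * Real.exp (-(1/2) * t))) / 2 := by gcongr
    _ ≤ _ := by nlinarith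

lemma qk_diff_bound {a t s₁ s₂ : ℝ} (ha : 0 < a) (ha1 : a < 1) (ht : 0 < t) (hs : -1 ≤ s₁)
    (hs1 : s₁ < 1) (hs' : -1 ≤ s₂) (hs1' : s₂ < 1) :
    |qk t s₁ - qk t s₂| ≤ |s₁ - s₂| * ((1 - s₁) / 2)⁻¹ * ((1 - s₂) / 2) ^ (-((1 - a) / 2)) *
      (2 * Real.exp (-t) + 4 * (t ^ (-a) * Real.exp (-(1/2) * t))) := by
  have hc := Real.one_le_cosh t
  have hD1 : 0 < Real.cosh t - s₁ := by linarith
  have hD2 : 0 < Real.cosh t - s₂ := by linarith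
  have hsh : 0 ≤ Real.sinh t := Real.sinh_nonneg_iff.2 ht.le
  have hA : 0 < (1 - s₁) / 2 := by linarith
  have hA2 : 0 < (1 - s₂) / 2 := by linarith
  have e0 : qk t s₁ - qk t s₂ =
      (s₁ - s₂) * (Real.sinh t / (2 * ((Real.cosh t - s₁) * (Real.cosh t - s₂)))) := by
    have : Real.exp (-t) = Real.cosh t - Real.sinh t := by
      rw [Real.cosh_eq, Real.sinh_eq]; ring
    rw [qk, qk, this]
    field_simp
    ring
  have h1 := t_div_D_le ha ha1 ht hs' hs1'
  set W := ((1 - s₂) / 2) ^ (-((1 - a) / 2)) with hW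
  have hW0 : 0 < W := by positivity
  have h2 : Real.sinh t / (Real.cosh t - s₁) ≤ t * ((1 - s₁) / 2)⁻¹ := by
    rw [div_le_iff₀ hD1]
    have e1 := sinh_le_self_mul ht.le
    have e2 := cosh_ge_half_sq t
    have e3 := cosh_sub_ge_one (t := t) hs hs1.le
    have e4 : Real.cosh t ≤ ((1 - s₁) / 2)⁻¹ * (Real.cosh t - s₁) := by
      rw [inv_mul_eq_div, le_div_iff₀ hA]; exact e3
    calc Real.sinh t ≤ t * Real.cosh (t / 2) ^ 2 := e1
      _ ≤ t * Real.cosh t := by gcongr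
      _ ≤ t * (((1 - s₁) / 2)⁻¹ * (Real.cosh t - s₁)) := by gcongr
      _ = _ := by ring
  have hE := (Real.exp_pos (-t)).le
  rw [e0, abs_mul, abs_of_nonneg (by positivity : 0 ≤ Real.sinh t / (2 * ((Real.cosh t - s₁) * (Real.cosh t - s₂))))]
  rw [mul_assoc, mul_assoc]
  gcongr
  calc Real.sinh t / (2 * ((Real.cosh t - s₁) * (Real.cosh t - s₂)))
      = (Real.sinh t / (Real.cosh t - s₁)) / (2 * (Real.cosh t - s₂)) := by field_simp
    _ ≤ (t * ((1 - s₁) / 2)⁻¹) / (2 * (Real.cosh t - s₂)) := by gcongr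
    _ = ((1 - s₁) / 2)⁻¹ * ((t / (Real.cosh t - s₂)) / 2) := by field_simp
    _ ≤ ((1 - s₁) / 2)⁻¹ * ((8 * W * (t ^ (-a) * Real.exp (-(1/2) * t))) / 2) := by gcongr
    _ ≤ _ := by
      gcongr
      nlinarith

lemma qk_meas (α s : ℝ) : Measurable (fun t : ℝ => t ^ (α - 1) * qk t s) := by
  unfold qk; fun_prop

lemma qk_integrable {α s : ℝ} (hα : 0 < α) (hs : -1 ≤ s) (hs1 : s < 1) :
    IntegrableOn (fun t : ℝ => t ^ (α - 1) * qk t s) (Set.Ioi 0) := by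
  obtain ⟨a, ha, ha'⟩ := exists_between (lt_min hα one_pos)
  have haα := ha'.trans_le (min_le_left _ _)
  have ha1 := ha'.trans_le (min_le_right _ _)
  refine Integrable.mono' ((majk_integrable hα haα).const_mul (((1 - s) / 2) ^ (-((1 - a) / 2))))
    (qk_meas α s).aestronglyMeasurable ?_
  filter_upwards [ae_restrict_mem measurableSet_Ioi] with t ht
  have ht' : (0:ℝ) < t := ht
  have := qk_bound ha ha1 ht' hs hs1
  rw [Real.norm_eq_abs, abs_mul, abs_of_pos (by positivity : 0 < t ^ (α - 1)), majk]
  calc _ ≤ _ := mul_le_mul_of_nonneg_left this (by positivity)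
    _ = _ := by ring

lemma Qk_bound {α a : ℝ} (hα : 0 < α) (ha : 0 < a) (ha1 : a < 1) (haα : a < α) {s : ℝ}
    (hs : -1 ≤ s) (hs1 : s < 1) :
    |Qk α s| ≤ (∫ t in Set.Ioi (0:ℝ), majk α a t) * ((1 - s) / 2) ^ (-((1 - a) / 2)) := by
  rw [mul_comm, ← integral_const_mul]
  rw [← Real.norm_eq_abs]
  refine norm_integral_le_of_norm_le ((majk_integrable hα haα).const_mul _) ?_
  filter_upwards [ae_restrict_mem measurableSet_Ioi] with t ht
  have ht' : (0:ℝ) < t := ht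
  have := qk_bound ha ha1 ht' hs hs1
  rw [Real.norm_eq_abs, abs_mul, abs_of_pos (by positivity : 0 < t ^ (α - 1)), majk]
  calc _ ≤ _ := mul_le_mul_of_nonneg_left this (by positivity)
    _ = _ := by ring

lemma Qk_diff_bound {α a : ℝ} (hα : 0 < α) (ha : 0 < a) (ha1 : a < 1) (haα : a < α)
    {s₁ s₂ : ℝ} (hs : -1 ≤ s₁) (hs1 : s₁ < 1) (hs' : -1 ≤ s₂) (hs1' : s₂ < 1) :
    |Qk α s₁ - Qk α s₂| ≤ (∫ t in Set.Ioi (0:ℝ), majk α a t) *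
      (|s₁ - s₂| * ((1 - s₁) / 2)⁻¹ * ((1 - s₂) / 2) ^ (-((1 - a) / 2))) := by
  rw [mul_comm, ← integral_const_mul, Qk, Qk,
    ← integral_sub (qk_integrable hα hs hs1) (qk_integrable hα hs' hs1')]
  rw [← Real.norm_eq_abs]
  refine norm_integral_le_of_norm_le ((majk_integrable hα haα).const_mul _) ?_
  filter_upwards [ae_restrict_mem measurableSet_Ioi] with t ht
  have ht' : (0:ℝ) < t := ht
  have := qk_diff_bound ha ha1 ht' hs hs1 hs' hs1'
  rw [← mul_sub, Real.norm_eq_abs, abs_mul, abs_of_pos (by positivity : 0 < t ^ (α - 1)), majk]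
  calc _ ≤ _ := mul_le_mul_of_nonneg_left this (by positivity)
    _ = _ := by ring

lemma majk_int_nonneg (α a : ℝ) : 0 ≤ ∫ t in Set.Ioi (0:ℝ), majk α a t := by
  refine setIntegral_nonneg measurableSet_Ioi fun t ht => ?_
  have ht' : (0:ℝ) < t := ht
  unfold majk; positivity

/-! ### Smoothness of the kernel away from the singularity -/

lemma cosh_sub_norm_ge {t δ : ℝ} {s : ℂ} (hδ : 0 < δ) (hδ1 : δ ≤ 1) (hs : s.re ≤ 1 - δ) :
    δ * Real.cosh t ≤ ‖((Real.cosh t : ℝ) : ℂ) - s‖ := by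
  have h1 := Real.one_le_cosh t
  calc δ * Real.cosh t ≤ Real.cosh t - s.re := by nlinarith
    _ = (((Real.cosh t : ℝ) : ℂ) - s).re := by simp
    _ ≤ _ := Complex.re_le_norm _

lemma inv_cosh_le (t : ℝ) : (Real.cosh t)⁻¹ ≤ 2 * Real.exp (-t) := by
  rw [Real.exp_neg, inv_le_comm₀ (Real.cosh_pos t) (by positivity)]
  have := half_exp_le_cosh t
  rw [mul_inv, inv_inv]; linarith

lemma rpow_exp_integrable {α : ℝ} (hα : 0 < α) :
    IntegrableOn (fun t : ℝ => t ^ (α - 1) * Real.exp (-t)) (Set.Ioi 0) :=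
  integrableOn_rpow_mul_exp_neg_mul_rpow (p := 1) (s := α - 1) (b := 1) (by linarith)
    (by norm_num) (by norm_num) |>.congr_fun (fun t _ => by simp) measurableSet_Ioi

/-- Complex version of `Qk`. -/
noncomputable def QkC (α : ℝ) (s : ℂ) : ℂ := ∫ t in Set.Ioi (0:ℝ),
  ((t ^ (α - 1) : ℝ) : ℂ) * ((s - ((Real.exp (-t) : ℝ) : ℂ)) / (2 * (((Real.cosh t : ℝ) : ℂ) - s)))

lemma QkC_ofReal (α s : ℝ) : QkC α (s : ℂ) = ((Qk α s : ℝ) : ℂ) := by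
  unfold QkC Qk
  rw [← integral_complex_ofReal]
  refine integral_congr_ae (Filter.Eventually.of_forall fun t => ?_)
  simp [qk]

lemma QkC_differentiableAt {α : ℝ} (hα : 0 < α) {s₀ : ℂ} (hs₀ : s₀.re < 1) :
    DifferentiableAt ℂ (QkC α) s₀ := by
  set δ := min ((1 - s₀.re) / 2) 1 with hδdef
  have hδ : 0 < δ := lt_min (by linarith) one_pos
  have hδ1 : δ ≤ 1 := min_le_right _ _
  have hδ2 : δ ≤ (1 - s₀.re) / 2 := min_le_left _ _
  have hball : ∀ s ∈ Metric.ball s₀ δ, s.re ≤ 1 - δ := by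
    intro s hs
    have h1 : |(s - s₀).re| ≤ ‖s - s₀‖ := Complex.abs_re_le_norm _
    rw [mem_ball_iff_norm] at hs
    rw [Complex.sub_re] at h1
    have := le_abs_self (s.re - s₀.re)
    linarith
  have hlow : ∀ s ∈ Metric.ball s₀ δ, ∀ t : ℝ,
      δ * Real.cosh t ≤ ‖((Real.cosh t : ℝ) : ℂ) - s‖ :=
    fun s hs t => cosh_sub_norm_ge hδ hδ1 (hball s hs)
  have hne : ∀ s ∈ Metric.ball s₀ δ, ∀ t : ℝ, ((Real.cosh t : ℝ) : ℂ) - s ≠ 0 := by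
    intro s hs t h0
    have := hlow s hs t
    rw [h0, norm_zero] at this
    have h2 := mul_pos hδ (Real.cosh_pos t)
    linarith
  have hmeas : ∀ s : ℂ, Measurable (fun t : ℝ => ((t ^ (α - 1) : ℝ) : ℂ) *
      ((s - ((Real.exp (-t) : ℝ) : ℂ)) / (2 * (((Real.cosh t : ℝ) : ℂ) - s)))) := by
    intro s
    have h1 : Measurable fun t : ℝ => ((t ^ (α - 1) : ℝ) : ℂ) :=
      Complex.measurable_ofReal.comp (by fun_prop)
    have h2 : Measurable fun t : ℝ => ((Real.exp (-t) : ℝ) : ℂ) :=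
      Complex.measurable_ofReal.comp (by fun_prop)
    have h3 : Measurable fun t : ℝ => ((Real.cosh t : ℝ) : ℂ) :=
      Complex.measurable_ofReal.comp (by fun_prop)
    exact h1.mul ((measurable_const.sub h2).div (measurable_const.mul (h3.sub measurable_const)))
  have hs₀b : s₀ ∈ Metric.ball s₀ δ := Metric.mem_ball_self hδ
  have key := hasDerivAt_integral_of_dominated_loc_of_deriv_le (μ := volume.restrict (Set.Ioi (0:ℝ)))
    (F := fun (s : ℂ) (t : ℝ) => ((t ^ (α - 1) : ℝ) : ℂ) *
      ((s - ((Real.exp (-t) : ℝ) : ℂ)) / (2 * (((Real.cosh t : ℝ) : ℂ) - s))))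
    (F' := fun (s : ℂ) (t : ℝ) => ((t ^ (α - 1) : ℝ) : ℂ) *
      (((Real.sinh t : ℝ) : ℂ) / (2 * (((Real.cosh t : ℝ) : ℂ) - s) ^ 2)))
    (bound := fun t => (δ ^ 2)⁻¹ * (t ^ (α - 1) * Real.exp (-t)))
    (x₀ := s₀) (Metric.ball_mem_nhds s₀ hδ) ?_ ?_ ?_ ?_ ?_ ?_
  · exact key.2.differentiableAt
  · exact Filter.Eventually.of_forall fun s => (hmeas s).aestronglyMeasurable
  · refine Integrable.mono' ((rpow_exp_integrable hα).const_mul ((‖s₀‖ + 1) * δ⁻¹))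
      (hmeas s₀).aestronglyMeasurable ?_
    filter_upwards [ae_restrict_mem measurableSet_Ioi] with t ht
    have ht' : (0:ℝ) < t := ht
    have hl := hlow s₀ hs₀b t
    have hdc : 0 < δ * Real.cosh t := mul_pos hδ (Real.cosh_pos t)
    have hn : ‖s₀ - ((Real.exp (-t) : ℝ) : ℂ)‖ ≤ ‖s₀‖ + 1 := by
      refine (norm_sub_le _ _).trans ?_
      gcongr
      rw [Complex.norm_real, Real.norm_eq_abs, abs_of_pos (Real.exp_pos _)]
      exact Real.exp_le_one_iff.2 (by linarith)
    rw [norm_mul, norm_div, norm_mul, Complex.norm_real, Real.norm_eq_abs,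
      abs_of_pos (by positivity : 0 < t ^ (α - 1))]
    have h2 : ‖(2:ℂ)‖ = 2 := by simp
    rw [h2]
    calc t ^ (α - 1) * (‖s₀ - ((Real.exp (-t) : ℝ) : ℂ)‖ / (2 * ‖((Real.cosh t : ℝ) : ℂ) - s₀‖))
        ≤ t ^ (α - 1) * ((‖s₀‖ + 1) / (2 * (δ * Real.cosh t))) := by gcongr
      _ = t ^ (α - 1) * ((‖s₀‖ + 1) * δ⁻¹ * ((Real.cosh t)⁻¹ / 2)) := by
          have := Real.cosh_pos t
          field_simp
      _ ≤ t ^ (α - 1) * ((‖s₀‖ + 1) * δ⁻¹ * ((2 * Real.exp (-t)) / 2)) := by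
          gcongr; exact inv_cosh_le t
      _ = _ := by ring
  · have h1 : Measurable fun t : ℝ => ((t ^ (α - 1) : ℝ) : ℂ) :=
      Complex.measurable_ofReal.comp (by fun_prop)
    have h2 : Measurable fun t : ℝ => ((Real.sinh t : ℝ) : ℂ) :=
      Complex.measurable_ofReal.comp (by fun_prop)
    have h3 : Measurable fun t : ℝ => ((Real.cosh t : ℝ) : ℂ) :=
      Complex.measurable_ofReal.comp (by fun_prop)
    exact (h1.mul (h2.div (measurable_const.mul
      ((h3.sub measurable_const).pow_const 2)))).aestronglyMeasurable
  · filter_upwards [ae_restrict_mem measurableSet_Ioi] with t ht s hs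
    have ht' : (0:ℝ) < t := ht
    have hl := hlow s hs t
    have hdc : 0 < δ * Real.cosh t := mul_pos hδ (Real.cosh_pos t)
    have hsh : 0 ≤ Real.sinh t := Real.sinh_nonneg_iff.2 ht'.le
    have h2 : ‖(2:ℂ)‖ = 2 := by simp
    rw [norm_mul, norm_div, norm_mul, norm_pow, Complex.norm_real, Complex.norm_real,
      Real.norm_eq_abs, Real.norm_eq_abs, abs_of_pos (by positivity : 0 < t ^ (α - 1)),
      abs_of_nonneg hsh, h2]
    have hsc : Real.sinh t ≤ Real.cosh t := (Real.sinh_lt_cosh t).le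
    calc t ^ (α - 1) * (Real.sinh t / (2 * ‖((Real.cosh t : ℝ) : ℂ) - s‖ ^ 2))
        ≤ t ^ (α - 1) * (Real.cosh t / (2 * (δ * Real.cosh t) ^ 2)) := by gcongr
      _ = t ^ (α - 1) * ((δ ^ 2)⁻¹ * ((Real.cosh t)⁻¹ / 2)) := by
          have := Real.cosh_pos t
          field_simp
      _ ≤ t ^ (α - 1) * ((δ ^ 2)⁻¹ * ((2 * Real.exp (-t)) / 2)) := by
          gcongr; exact inv_cosh_le t
      _ = _ := by ring
  · exact (rpow_exp_integrable hα).const_mul _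
  · refine Filter.Eventually.of_forall fun t s hs => ?_
    have h0 := hne s hs t
    have hd1 : HasDerivAt (fun s : ℂ => s - ((Real.exp (-t) : ℝ) : ℂ)) 1 s :=
      (hasDerivAt_id s).sub_const _
    have hd2 : HasDerivAt (fun s : ℂ => 2 * (((Real.cosh t : ℝ) : ℂ) - s)) (2 * (-1)) s :=
      ((hasDerivAt_id s).const_sub _).const_mul 2
    have hd := (hd1.div hd2 (mul_ne_zero two_ne_zero h0)).const_mul ((t ^ (α - 1) : ℝ) : ℂ)
    refine hd.congr_deriv ?_
    congr 1
    have e : Real.exp (-t) = Real.cosh t - Real.sinh t := by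
      rw [Real.cosh_eq, Real.sinh_eq]; ring
    rw [e]
    push_cast at h0 ⊢
    field_simp
    ring

lemma Qk_contDiffAt {α : ℝ} (hα : 0 < α) {s₀ : ℝ} (hs₀ : s₀ < 1) :
    ContDiffAt ℝ (⊤ : ℕ∞) (Qk α) s₀ := by
  have hopen : IsOpen {s : ℂ | s.re < 1} := isOpen_lt Complex.continuous_re continuous_const
  have hd : DifferentiableOn ℂ (QkC α) {s : ℂ | s.re < 1} :=
    fun s hs => (QkC_differentiableAt hα hs).differentiableWithinAt
  have hc : ContDiffAt ℂ (⊤ : ℕ∞) (QkC α) (s₀ : ℂ) :=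
    (hd.contDiffOn hopen).contDiffAt (hopen.mem_nhds (by simpa using hs₀))
  have := hc.real_of_complex
  refine this.congr_of_eventuallyEq (Filter.Eventually.of_forall fun s => ?_)
  simp [QkC_ofReal]

lemma Kker_contDiffAt {α : ℝ} (hα : 0 < α) {x : ℝ} (hx : Real.cos x ≠ 1) :
    ContDiffAt ℝ (⊤ : ℕ∞) (Kker α) x := by
  have h1 : Real.cos x < 1 := lt_of_le_of_ne (Real.cos_le_one x) hx
  have h2 : ContDiffAt ℝ (⊤ : ℕ∞) (fun x => (1 / (π * Real.Gamma α)) * Qk α (Real.cos x)) x :=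
    contDiffAt_const.mul ((Qk_contDiffAt hα h1).comp x Real.contDiff_cos.contDiffAt)
  refine h2.congr_of_eventuallyEq ?_
  have : ∀ᶠ y in 𝓝 x, Real.cos y ≠ 1 :=
    Real.continuous_cos.continuousAt.eventually_ne hx
  filter_upwards [this] with y hy
  exact Kker_of_ne hy

lemma Kker_measurable {α : ℝ} (hα : 0 < α) : Measurable (Kker α) := by
  classical
  have hopen : IsOpen {x : ℝ | Real.cos x ≠ 1} :=
    isOpen_ne_fun Real.continuous_cos continuous_const
  have hcont : ContinuousOn (Kker α) {x : ℝ | Real.cos x ≠ 1} :=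
    fun x hx => (Kker_contDiffAt hα hx).continuousAt.continuousWithinAt
  have h0 : ContinuousOn (fun _ : ℝ => (0:ℝ)) {x : ℝ | Real.cos x ≠ 1}ᶜ := continuousOn_const
  have := hcont.measurable_piecewise h0 hopen.measurableSet
  convert this using 1
  ext x
  by_cases hx : Real.cos x = 1
  · simp [Set.piecewise, hx, Kker_of_one hx]
  · simp [Set.piecewise, hx]

/-! ### Pointwise kernel bounds -/

lemma sin_lower {y : ℝ} (hy : 0 ≤ y) (hy1 : y ≤ 3 * π / 4) : 2 * y / (3 * π) ≤ Real.sin y := by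
  have hpi := Real.pi_pos
  rcases le_total y (π / 2) with h | h
  · refine le_trans ?_ (Real.mul_le_sin hy h)
    rw [div_le_iff₀ (by positivity)]
    have : 2 / π * y * (3 * π) = 6 * y := by field_simp; ring
    rw [this]; linarith
  · have h1 := Real.mul_le_sin (x := π - y) (by linarith) (by linarith)
    rw [Real.sin_pi_sub] at h1
    refine le_trans ?_ h1
    rw [div_le_iff₀ (by positivity)]
    have : 2 / π * (π - y) * (3 * π) = 6 * (π - y) := by field_simp; ring
    rw [this]; linarith

lemma one_sub_cos_lower {x : ℝ} (hx : |x| ≤ 3 * π / 2) :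
    (1 / (9 * π ^ 2)) * x ^ 2 ≤ (1 - Real.cos x) / 2 := by
  have hpi := Real.pi_pos
  have h1 := sin_lower (y := |x| / 2) (by positivity) (by linarith)
  have h2 : Real.cos x = 1 - 2 * Real.sin (|x| / 2) ^ 2 := by
    rw [← Real.cos_abs x]
    have := Real.cos_sq' (|x| / 2)
    have h3 := Real.cos_sq (|x| / 2)
    rw [show 2 * (|x| / 2) = |x| by ring] at h3
    linarith
  have h3 : (2 * (|x| / 2) / (3 * π)) ^ 2 ≤ Real.sin (|x| / 2) ^ 2 :=
    pow_le_pow_left₀ (by positivity) h1 2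
  have h4 : (2 * (|x| / 2) / (3 * π)) ^ 2 = (1 / (9 * π ^ 2)) * x ^ 2 := by
    rw [← sq_abs x]; field_simp; norm_num
  rw [h4] at h3
  rw [h2]; linarith

lemma cos_diff_le (x y : ℝ) : |Real.cos x - Real.cos y| ≤ |x - y| * (|x| + |y|) / 2 := by
  rw [Real.cos_sub_cos]
  have h1 : |Real.sin ((x + y) / 2)| ≤ |(x + y) / 2| := Real.abs_sin_le_abs
  have h2 : |Real.sin ((x - y) / 2)| ≤ |(x - y) / 2| := Real.abs_sin_le_abs
  rw [abs_mul, abs_mul, show |(-2:ℝ)| = 2 by norm_num]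
  rw [abs_div, show |(2:ℝ)| = 2 by norm_num] at h1 h2
  have h3 := abs_add_le x y
  calc 2 * |Real.sin ((x + y) / 2)| * |Real.sin ((x - y) / 2)|
      ≤ 2 * (|x + y| / 2) * (|x - y| / 2) := by gcongr
    _ ≤ 2 * ((|x| + |y|) / 2) * (|x - y| / 2) := by gcongr
    _ = _ := by ring

lemma Kker_bounds {α a : ℝ} (hα : 0 < α) (ha : 0 < a) (ha1 : a < 1) (haα : a < α) :
    ∃ C : ℝ, 0 < C ∧ (∀ z : ℝ, |z| ≤ 3 * π / 2 → |Kker α z| ≤ C * |z| ^ (a - 1)) ∧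
      (∀ z h : ℝ, |z| ≤ π → 2 * |h| ≤ |z| →
        |Kker α (z + h) - Kker α z| ≤ C * (|h| * |z| ^ (a - 2))) := by
  have hpi := Real.pi_pos
  set κ : ℝ := 1 / (9 * π ^ 2) with hκ
  have hκ0 : 0 < κ := by positivity
  set I := ∫ t in Set.Ioi (0:ℝ), majk α a t with hI
  have hI0 : 0 ≤ I := majk_int_nonneg α a
  set G : ℝ := |1 / (π * Real.Gamma α)| with hG
  have hG0 : 0 ≤ G := abs_nonneg _
  set θ := (1 - a) / 2 with hθ
  have hne : ∀ z : ℝ, z ≠ 0 → |z| ≤ 3 * π / 2 → Real.cos z < 1 := by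
    intro z hz0 hz
    have h1 := one_sub_cos_lower hz
    have : 0 < (1 / (9 * π ^ 2)) * z ^ 2 := by positivity
    linarith
  have hpow : ∀ z : ℝ, z ≠ 0 → |z| ≤ 3 * π / 2 →
      ((1 - Real.cos z) / 2) ^ (-θ) ≤ κ ^ (-θ) * |z| ^ (a - 1) := by
    intro z hz0 hz
    have h1 := one_sub_cos_lower hz
    have hz' : 0 < |z| := abs_pos.2 hz0
    calc ((1 - Real.cos z) / 2) ^ (-θ) ≤ (κ * z ^ 2) ^ (-θ) := by
          apply Real.rpow_le_rpow_of_nonpos (by positivity) h1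
          rw [hθ]; linarith
      _ = κ ^ (-θ) * |z| ^ (a - 1) := by
          rw [Real.mul_rpow hκ0.le (by positivity), ← sq_abs, ← Real.rpow_natCast,
            ← Real.rpow_mul hz'.le]
          congr 2
          rw [hθ]; push_cast; ring
  refine ⟨G * I * κ ^ (-θ) * (2 + 2 * κ⁻¹ * 4 * 2) + 1, by positivity, ?_, ?_⟩
  · intro z hz
    by_cases hz0 : z = 0
    · rw [hz0, Kker_of_one Real.cos_zero]; simp; positivity
    · have hc := hne z hz0 hz
      have hz' : 0 < |z| := abs_pos.2 hz0
      rw [Kker_of_ne hc.ne, abs_mul]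
      have h1 := Qk_bound hα ha ha1 haα (Real.neg_one_le_cos z) hc
      have h2 := hpow z hz0 hz
      calc G * |Qk α (Real.cos z)| ≤ G * (I * (κ ^ (-θ) * |z| ^ (a - 1))) := by
            gcongr; exact h1.trans (by gcongr)
        _ = (G * I * κ ^ (-θ) * 1) * |z| ^ (a - 1) := by ring
        _ ≤ _ := by
            gcongr
            have e1 : (1:ℝ) ≤ 2 + 2 * κ⁻¹ * 4 * 2 := by
              have : 0 < κ⁻¹ := by positivity
              linarith
            have e2 : G * I * κ ^ (-θ) * 1 ≤ G * I * κ ^ (-θ) * (2 + 2 * κ⁻¹ * 4 * 2) := by gcongr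
            linarith
  · intro z h hz hh
    by_cases hz0 : z = 0
    · have : h = 0 := by
        rw [hz0, abs_zero] at hh
        exact abs_eq_zero.1 (le_antisymm (by linarith) (abs_nonneg _))
      rw [hz0, this]; simp
    · have hz' : 0 < |z| := abs_pos.2 hz0
      have hzh1 : |z + h| ≤ 3 * π / 2 := by
        have := abs_add_le z h
        linarith
      have hzh2 : |z| / 2 ≤ |z + h| := by
        have := abs_sub_abs_le_abs_sub z (-h)
        rw [abs_neg, sub_neg_eq_add] at this
        linarith
      have hzh3 : |z + h| ≤ 3 / 2 * |z| := by
        have := abs_add_le z h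
        linarith
      have hzh0 : z + h ≠ 0 := by
        intro h0; rw [h0, abs_zero] at hzh2; linarith
      have hzle : |z| ≤ 3 * π / 2 := by linarith
      have hc := hne z hz0 hzle
      have hc' := hne (z + h) hzh0 hzh1
      rw [Kker_of_ne hc.ne, Kker_of_ne hc'.ne, ← mul_sub, abs_mul]
      have h1 := Qk_diff_bound hα ha ha1 haα (Real.neg_one_le_cos (z + h)) hc'
        (Real.neg_one_le_cos z) hc
      have h2 := hpow z hz0 hzle
      have h3 : |Real.cos (z + h) - Real.cos z| ≤ 2 * (|h| * |z|) := by
        refine (cos_diff_le _ _).trans ?_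
        rw [add_sub_cancel_left]
        have := abs_nonneg h
        nlinarith
      have h4 : ((1 - Real.cos (z + h)) / 2)⁻¹ ≤ κ⁻¹ * 4 * (|z| ^ 2)⁻¹ := by
        have e := one_sub_cos_lower hzh1
        have e2 : κ * (|z| ^ 2 / 4) ≤ (1 - Real.cos (z + h)) / 2 := by
          refine le_trans ?_ e
          gcongr
          rw [← sq_abs (z + h)]
          nlinarith
        calc ((1 - Real.cos (z + h)) / 2)⁻¹ ≤ (κ * (|z| ^ 2 / 4))⁻¹ := by gcongr
          _ = _ := by field_simp
      have h5 : 0 ≤ (1 - Real.cos (z + h)) / 2 := by linarith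
      have h6 : 0 ≤ (1 - Real.cos z) / 2 := by linarith
      have e3 : |z| ^ (a - 2) = |z| * (|z| ^ 2)⁻¹ * |z| ^ (a - 1) := by
        rw [show a - 2 = (a - 1) + (-1) by ring, Real.rpow_add hz', Real.rpow_neg_one]
        field_simp
      calc G * |Qk α (Real.cos (z + h)) - Qk α (Real.cos z)|
          ≤ G * (I * ((2 * (|h| * |z|)) * (κ⁻¹ * 4 * (|z| ^ 2)⁻¹) *
              (κ ^ (-θ) * |z| ^ (a - 1)))) := by
            gcongr
            refine h1.trans ?_
            gcongr
        _ = (G * I * κ ^ (-θ) * (2 * κ⁻¹ * 4)) * (|h| * |z| ^ (a - 2)) := by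
            rw [e3]; ring
        _ ≤ _ := by
            gcongr
            have e1 : 2 * κ⁻¹ * 4 ≤ 2 + 2 * κ⁻¹ * 4 * 2 := by
              have : 0 < κ⁻¹ := by positivity
              linarith
            have e2 : G * I * κ ^ (-θ) * (2 * κ⁻¹ * 4) ≤
              G * I * κ ^ (-θ) * (2 + 2 * κ⁻¹ * 4 * 2) := by gcongr
            linarith

/-! ### Convolution with the kernel -/

/-- Bounded measurable `2π`-periodic functions. -/
def NiceFn (F : ℝ → ℝ) : Prop :=
  Measurable F ∧ Function.Periodic F (2 * π) ∧ ∃ M : ℝ, ∀ x, |F x| ≤ M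

/-- Convolution with the kernel. -/
noncomputable def cv (α : ℝ) (F : ℝ → ℝ) (x : ℝ) : ℝ := ∫ y in (-π)..π, Kker α (x - y) * F y

lemma niceFn_of_continuous {F : ℝ → ℝ} (hF : Continuous F) (hp : Function.Periodic F (2 * π)) :
    NiceFn F := by
  refine ⟨hF.measurable, hp, ?_⟩
  have hb : Bornology.IsBounded (Set.range F) := hp.isBounded_of_continuous (by positivity) hF
  obtain ⟨M, hM⟩ := hb.exists_norm_le
  exact ⟨M, fun x => hM _ ⟨x, rfl⟩⟩

lemma abs_rpow_intervalIntegrable {r : ℝ} (hr : -1 < r) (u v : ℝ) :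
    IntervalIntegrable (fun x : ℝ => |x| ^ r) volume u v := by
  have hpos : ∀ R : ℝ, 0 ≤ R → IntervalIntegrable (fun x : ℝ => |x| ^ r) volume 0 R := by
    intro R hR
    refine (intervalIntegral.intervalIntegrable_rpow' hr (a := 0) (b := R)).congr ?_
    intro x hx
    rw [Set.uIoc_of_le hR] at hx
    simp only [abs_of_pos hx.1]
  have hneg : ∀ R : ℝ, 0 ≤ R → IntervalIntegrable (fun x : ℝ => |x| ^ r) volume 0 (-R) := by
    intro R hR
    have h := (IntervalIntegrable.iff_comp_neg enorm_ne_top).1 (hpos R hR)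
    simpa using h
  have hall : ∀ R : ℝ, IntervalIntegrable (fun x : ℝ => |x| ^ r) volume 0 R := by
    intro R
    rcases le_total 0 R with h | h
    · exact hpos R h
    · simpa using hneg (-R) (by linarith)
  exact (hall u).symm.trans (hall v)

lemma Kker_intervalIntegrable {α : ℝ} (hα : 0 < α) (u v : ℝ) :
    IntervalIntegrable (Kker α) volume u v := by
  have hpi := Real.pi_pos
  obtain ⟨a, ha, ha'⟩ := exists_between (lt_min hα one_pos)
  obtain ⟨C, hC, h1, -⟩ := Kker_bounds hα ha (ha'.trans_le (min_le_right _ _))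
    (ha'.trans_le (min_le_left _ _))
  have h2 : IntervalIntegrable (Kker α) volume (-π) (-π + 2 * π) := by
    rw [show -π + 2 * π = π by ring]
    refine ((abs_rpow_intervalIntegrable (r := a - 1) (by linarith) (-π) π).const_mul C).mono_fun
      (Kker_measurable hα).aestronglyMeasurable ?_
    filter_upwards [ae_restrict_mem measurableSet_uIoc] with z hz
    rw [Set.uIoc_of_le (by linarith)] at hz
    rw [Real.norm_eq_abs, Real.norm_eq_abs]
    refine (h1 z ?_).trans (le_abs_self _)
    rw [abs_le]; constructor <;> linarith [hz.1, hz.2]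
  exact (Kker_periodic α).intervalIntegrable (by positivity) h2 u v

lemma periodic_conv_comm {P Q : ℝ → ℝ} (hP : Function.Periodic P (2 * π))
    (hQ : Function.Periodic Q (2 * π)) (x : ℝ) :
    (∫ y in (-π)..π, P (x - y) * Q y) = ∫ z in (-π)..π, P z * Q (x - z) := by
  have h1 : (∫ y in (-π)..π, P (x - y) * Q y) =
      ∫ y in (-π)..π, (fun z => P z * Q (x - z)) (x - y) := by
    simp
  rw [h1, intervalIntegral.integral_comp_sub_left (fun z => P z * Q (x - z)) x]
  have hper : Function.Periodic (fun z => P z * Q (x - z)) (2 * π) := by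
    intro z
    simp only
    rw [hP z, show x - (z + 2 * π) = (x - z) - 2 * π by ring, hQ.sub_eq]
  have := hper.intervalIntegral_add_eq (x - π) (-π)
  rw [show x - -π = x - π + 2 * π by ring, this, show -π + 2 * π = π by ring]

lemma cv_shift {α : ℝ} {F : ℝ → ℝ} (hF : NiceFn F) (x h : ℝ) :
    cv α F (x + h) = ∫ z in (-π)..π, Kker α (z + h) * F (x - z) := by
  have hP : Function.Periodic (fun z => Kker α (z + h)) (2 * π) := by
    intro z
    simp only
    rw [show z + 2 * π + h = (z + h) + 2 * π by ring, Kker_periodic]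
  rw [← periodic_conv_comm hP hF.2.1 x]
  unfold cv
  congr 1
  ext y
  rw [show x + h - y = x - y + h by ring]

lemma cv_eq {α : ℝ} {F : ℝ → ℝ} (hF : NiceFn F) (x : ℝ) :
    cv α F x = ∫ z in (-π)..π, Kker α z * F (x - z) := by
  have := cv_shift (α := α) hF x 0
  simpa using this

lemma Kker_shift_integrable {α : ℝ} (hα : 0 < α) (h u v : ℝ) :
    IntervalIntegrable (fun z => Kker α (z + h)) volume u v := by
  have := (Kker_intervalIntegrable hα (u + h) (v + h)).comp_add_right h
  simpa using this

lemma mul_nice_integrable {k : ℝ → ℝ} {u v : ℝ} (hk : IntervalIntegrable k volume u v)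
    {G : ℝ → ℝ} (hG : Measurable G) {M : ℝ} (hM : ∀ x, |G x| ≤ M) :
    IntervalIntegrable (fun z => k z * G z) volume u v := by
  have : IntervalIntegrable (fun z => G z * k z) volume u v := by
    rw [intervalIntegrable_iff] at hk ⊢
    exact hk.bdd_mul (c := M) hG.aestronglyMeasurable
      (Filter.Eventually.of_forall fun x => by rw [Real.norm_eq_abs]; exact hM x)
  exact this.congr (fun z _ => mul_comm _ _)

lemma cv_diff {α : ℝ} (hα : 0 < α) {F : ℝ → ℝ} (hF : NiceFn F) (x h : ℝ) :
    cv α F (x + h) - cv α F x =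
      ∫ z in (-π)..π, (Kker α (z + h) - Kker α z) * (F (x - z) - F x) := by
  obtain ⟨M, hM⟩ := hF.2.2
  have hFx : Measurable fun z => F (x - z) := hF.1.comp (by fun_prop)
  have i1 := mul_nice_integrable (Kker_shift_integrable hα h (-π) π) hFx (fun z => hM (x - z))
  have i2 := mul_nice_integrable (Kker_intervalIntegrable hα (-π) π) hFx (fun z => hM (x - z))
  have i3 := (Kker_shift_integrable hα h (-π) π).mul_const (F x)
  have i4 := (Kker_intervalIntegrable hα (-π) π).mul_const (F x)
  rw [cv_shift hF, cv_eq hF, ← intervalIntegral.integral_sub i1 i2]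
  have e0 : (∫ z in (-π)..π, Kker α (z + h) * F x) = ∫ z in (-π)..π, Kker α z * F x := by
    have hp : Function.Periodic (fun z => Kker α z * F x) (2 * π) := by
      intro z; simp only; rw [Kker_periodic α z]
    have e1 := intervalIntegral.integral_comp_add_right (a := -π) (b := π)
      (fun z => Kker α z * F x) h
    rw [e1]
    have := hp.intervalIntegral_add_eq (-π + h) (-π)
    rw [show -π + h + 2 * π = π + h by ring, show -π + 2 * π = π by ring] at this
    exact this
  have e2 : (∫ z in (-π)..π, (Kker α (z + h) * F x - Kker α z * F x)) = 0 := by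
    rw [intervalIntegral.integral_sub i3 i4, e0, sub_self]
  rw [← sub_zero (∫ z in (-π)..π, (Kker α (z + h) * F (x - z) - Kker α z * F (x - z))), ← e2,
    ← intervalIntegral.integral_sub (i1.sub i2) (i3.sub i4)]
  congr 1
  ext z
  ring

lemma Kker_holder {α b : ℝ} (hα : 0 < α) (hb : 0 < b) (hb1 : 2 * b < 1) (hbα : 2 * b < α) :
    ∃ C : ℝ, 0 < C ∧ ∀ β : ℝ, 0 ≤ β → β + b ≤ 1 → ∀ z h : ℝ, |z| ≤ π → |h| ≤ π / 2 →
      |Kker α (z + h) - Kker α z| * |z| ^ β ≤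
        C * |h| ^ (β + b) * (|z| ^ (b - 1) + |z + h| ^ (b - 1)) := by
  have hpi := Real.pi_pos
  obtain ⟨C, hC, hK, hKd⟩ := Kker_bounds hα (a := 2 * b) (by linarith) hb1 hbα
  refine ⟨6 * C, by positivity, ?_⟩
  intro β hβ hβb z h hz hh
  by_cases hh0 : h = 0
  · rw [hh0]; simp; positivity
  have hh' : 0 < |h| := abs_pos.2 hh0
  rcases le_or_gt (2 * |h|) |z| with hcase | hcase
  · have hz' : 0 < |z| := by linarith
    calc |Kker α (z + h) - Kker α z| * |z| ^ β ≤ C * (|h| * |z| ^ (2 * b - 2)) * |z| ^ β := by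
          gcongr; exact hKd z h hz hcase
      _ = C * (|h| ^ (β + b) * |h| ^ (1 - (β + b)) * |z| ^ (2 * b - 2)) * |z| ^ β := by
          rw [← Real.rpow_add hh']; simp
      _ ≤ C * (|h| ^ (β + b) * |z| ^ (1 - (β + b)) * |z| ^ (2 * b - 2)) * |z| ^ β := by
          have hx : |h| ^ (1 - (β + b)) ≤ |z| ^ (1 - (β + b)) :=
            Real.rpow_le_rpow hh'.le (by linarith) (by linarith)
          gcongr C * (|h| ^ (β + b) * ?_ * _) * _
      _ = C * |h| ^ (β + b) * |z| ^ (b - 1) := by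
          have : |z| ^ (b - 1) = |z| ^ (1 - (β + b)) * |z| ^ (2 * b - 2) * |z| ^ β := by
            rw [← Real.rpow_add hz', ← Real.rpow_add hz']; congr 1; ring
          rw [this]; ring
      _ ≤ C * |h| ^ (β + b) * (|z| ^ (b - 1) + |z + h| ^ (b - 1)) := by
          gcongr
          have : 0 ≤ |z + h| ^ (b - 1) := by positivity
          linarith
      _ ≤ _ := by gcongr; linarith
  · have hzh : |z + h| ≤ 3 * |h| := by
      have := abs_add_le z h; linarith
    have hzh' : |z + h| ≤ 3 * π / 2 := by
      linarith
    have t1 : |Kker α z| * |z| ^ β ≤ 6 * C * |h| ^ (β + b) * |z| ^ (b - 1) := by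
      by_cases hz0 : z = 0
      · rw [hz0, Kker_of_one Real.cos_zero, abs_zero, zero_mul]; positivity
      have hz' : 0 < |z| := abs_pos.2 hz0
      calc |Kker α z| * |z| ^ β ≤ C * |z| ^ (2 * b - 1) * |z| ^ β := by
            gcongr; exact hK z (by linarith)
        _ = C * |z| ^ (β + b) * |z| ^ (b - 1) := by
            rw [mul_assoc, mul_assoc, ← Real.rpow_add hz', ← Real.rpow_add hz']
            congr 2; ring
        _ ≤ C * (2 * |h|) ^ (β + b) * |z| ^ (b - 1) := by gcongr
        _ = C * (2 ^ (β + b) * |h| ^ (β + b)) * |z| ^ (b - 1) := by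
            rw [Real.mul_rpow (by norm_num) hh'.le]
        _ ≤ C * (6 * |h| ^ (β + b)) * |z| ^ (b - 1) := by
            gcongr
            calc (2:ℝ) ^ (β + b) ≤ 2 ^ (1:ℝ) :=
                  Real.rpow_le_rpow_of_exponent_le (by norm_num) hβb
              _ ≤ 6 := by norm_num
        _ = _ := by ring
    have t2 : |Kker α (z + h)| * |z| ^ β ≤ 6 * C * |h| ^ (β + b) * |z + h| ^ (b - 1) := by
      by_cases hz0 : z + h = 0
      · rw [hz0, Kker_of_one Real.cos_zero, abs_zero, zero_mul]; positivity
      have hz' : 0 < |z + h| := abs_pos.2 hz0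
      calc |Kker α (z + h)| * |z| ^ β ≤ C * |z + h| ^ (2 * b - 1) * (2 * |h|) ^ β := by
            gcongr; exact hK _ hzh'
        _ = C * (|z + h| ^ b * |z + h| ^ (b - 1)) * (2 * |h|) ^ β := by
            rw [← Real.rpow_add hz']
            congr 3; ring
        _ ≤ C * ((3 * |h|) ^ b * |z + h| ^ (b - 1)) * (2 * |h|) ^ β := by gcongr
        _ = C * (3 ^ b * 2 ^ β) * |h| ^ (β + b) * |z + h| ^ (b - 1) := by
            rw [Real.mul_rpow (by norm_num) hh'.le, Real.mul_rpow (by norm_num) hh'.le,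
              Real.rpow_add hh']
            ring
        _ ≤ C * (3 * 2) * |h| ^ (β + b) * |z + h| ^ (b - 1) := by
            gcongr
            · calc (3:ℝ) ^ b ≤ 3 ^ (1:ℝ) :=
                  Real.rpow_le_rpow_of_exponent_le (by norm_num) (by linarith)
                _ = 3 := by simp
            · calc (2:ℝ) ^ β ≤ 2 ^ (1:ℝ) :=
                  Real.rpow_le_rpow_of_exponent_le (by norm_num) (by linarith)
                _ = 2 := by simp
        _ = _ := by ring
    calc |Kker α (z + h) - Kker α z| * |z| ^ β
        ≤ (|Kker α (z + h)| + |Kker α z|) * |z| ^ β := by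
          gcongr; exact abs_sub _ _
      _ = |Kker α (z + h)| * |z| ^ β + |Kker α z| * |z| ^ β := by ring
      _ ≤ _ := by linarith

/-- Hölder gain for the convolution at a point. -/
lemma cv_holder {α b : ℝ} (hα : 0 < α) (hb : 0 < b) (hb1 : 2 * b < 1) (hbα : 2 * b < α) :
    ∃ C : ℝ, 0 < C ∧ ∀ β : ℝ, 0 ≤ β → β + b ≤ 1 → ∀ F : ℝ → ℝ, NiceFn F → ∀ A x : ℝ, 0 ≤ A →
      (∀ y, |F y - F x| ≤ A * |y - x| ^ β) → ∀ h : ℝ, |h| ≤ π / 2 →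
      |cv α F (x + h) - cv α F x| ≤ C * A * |h| ^ (β + b) := by
  have hpi := Real.pi_pos
  obtain ⟨C, hC, hK⟩ := Kker_holder hα hb hb1 hbα
  set I : ℝ := ∫ z in (-(2 * π))..(2 * π), |z| ^ (b - 1) with hI
  have hII : ∀ u v : ℝ, IntervalIntegrable (fun x : ℝ => |x| ^ (b - 1)) volume u v :=
    abs_rpow_intervalIntegrable (by linarith)
  have hI0 : 0 ≤ I := intervalIntegral.integral_nonneg (by linarith) (fun z _ => by positivity)
  refine ⟨C * (2 * I) + 1, by positivity, ?_⟩
  intro β hβ hβb F hF A x hA hx h hh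
  rw [cv_diff hα hF]
  have hh2 := abs_le.1 hh
  have hI1 : (∫ z in (-π)..π, |z| ^ (b - 1)) ≤ I :=
    intervalIntegral.integral_mono_interval (by linarith) (by linarith) (by linarith)
      (Filter.Eventually.of_forall fun z => by positivity) (hII _ _)
  have hI2 : (∫ z in (-π)..π, |z + h| ^ (b - 1)) ≤ I := by
    rw [intervalIntegral.integral_comp_add_right (fun z => |z| ^ (b - 1)) h]
    exact intervalIntegral.integral_mono_interval (by linarith) (by linarith) (by linarith)
      (Filter.Eventually.of_forall fun z => by positivity) (hII _ _)
  have hII2 : IntervalIntegrable (fun z : ℝ => |z + h| ^ (b - 1)) volume (-π) π := by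
    have := (hII (-π + h) (π + h)).comp_add_right h
    simpa using this
  calc |∫ z in (-π)..π, (Kker α (z + h) - Kker α z) * (F (x - z) - F x)|
      ≤ ∫ z in (-π)..π, (A * (C * |h| ^ (β + b))) * (|z| ^ (b - 1) + |z + h| ^ (b - 1)) := by
        rw [← Real.norm_eq_abs]
        refine intervalIntegral.norm_integral_le_of_norm_le (by linarith) ?_
          (((hII _ _).add hII2).const_mul _)
        refine Filter.Eventually.of_forall fun z hz => ?_
        have hz' : |z| ≤ π := abs_le.2 ⟨hz.1.le, hz.2⟩
        have h1 := hx (x - z)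
        rw [show x - z - x = -z by ring, abs_neg] at h1
        have h2 := hK β hβ hβb z h hz' hh
        rw [Real.norm_eq_abs, abs_mul]
        calc _ ≤ |Kker α (z + h) - Kker α z| * (A * |z| ^ β) := by gcongr
          _ = A * (|Kker α (z + h) - Kker α z| * |z| ^ β) := by ring
          _ ≤ A * (C * |h| ^ (β + b) * (|z| ^ (b - 1) + |z + h| ^ (b - 1))) := by gcongr
          _ = _ := by ring
    _ = (A * (C * |h| ^ (β + b))) * ((∫ z in (-π)..π, |z| ^ (b - 1)) +
          ∫ z in (-π)..π, |z + h| ^ (b - 1)) := by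
        rw [intervalIntegral.integral_const_mul, intervalIntegral.integral_add (hII _ _) hII2]
    _ ≤ (A * (C * |h| ^ (β + b))) * (I + I) := by gcongr
    _ = (C * (2 * I)) * A * |h| ^ (β + b) := by ring
    _ ≤ _ := by gcongr; linarith

/-- Convolution of a nice function is continuous. -/
lemma cv_continuous {α : ℝ} (hα : 0 < α) {F : ℝ → ℝ} (hF : NiceFn F) : Continuous (cv α F) := by
  have hpi := Real.pi_pos
  obtain ⟨a, ha, ha'⟩ := exists_between (lt_min hα one_pos)
  have haα := ha'.trans_le (min_le_left _ _)
  have ha1 := ha'.trans_le (min_le_right _ _)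
  obtain ⟨C, hC, h⟩ := cv_holder hα (b := a / 2) (by linarith) (by linarith) (by linarith)
  obtain ⟨M, hM⟩ := hF.2.2
  have hM0 : 0 ≤ M := (abs_nonneg _).trans (hM 0)
  rw [continuous_iff_continuousAt]
  intro x
  have h2 := h 0 le_rfl (by linarith) F hF (2 * M) x (by linarith) (fun y => by
    rw [Real.rpow_zero, mul_one]
    refine (abs_sub _ _).trans ?_
    linarith [hM x, hM y])
  rw [ContinuousAt, tendsto_iff_norm_sub_tendsto_zero]
  have hlim : Tendsto (fun y => C * (2 * M) * |y - x| ^ (0 + a / 2)) (𝓝 x) (𝓝 0) := by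
    have h3 : Continuous (fun y => C * (2 * M) * |y - x| ^ (0 + a / 2)) := by
      refine continuous_const.mul (Continuous.rpow_const (by fun_prop) ?_)
      intro y; right; linarith
    have := h3.tendsto x
    simp only [sub_self, abs_zero] at this
    rwa [Real.zero_rpow (by linarith), mul_zero] at this
  refine squeeze_zero' (Filter.Eventually.of_forall fun y => norm_nonneg _) ?_ hlim
  filter_upwards [Metric.ball_mem_nhds x (show 0 < π / 2 by positivity)] with y hy
  rw [Metric.mem_ball, Real.dist_eq] at hy
  have := h2 (y - x) hy.le
  rwa [show x + (y - x) = y by ring] at this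

/-! ### Cutoffs, differentiation and localisation -/

/-- A smooth periodic cutoff, equal to `0` when `cos (x - x₀) ≤ c₁` and `1` when
`cos (x - x₀) ≥ c₂`. -/
noncomputable def cutf (x₀ c₁ c₂ x : ℝ) : ℝ :=
  Real.smoothTransition ((Real.cos (x - x₀) - c₁) / (c₂ - c₁))

lemma cutf_contDiff (x₀ c₁ c₂ : ℝ) : ContDiff ℝ (⊤ : ℕ∞) (cutf x₀ c₁ c₂) := by
  unfold cutf
  refine Real.smoothTransition.contDiff.comp ?_
  fun_prop

lemma cutf_periodic (x₀ c₁ c₂ : ℝ) : Function.Periodic (cutf x₀ c₁ c₂) (2 * π) := by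
  intro x
  unfold cutf
  rw [show x + 2 * π - x₀ = x - x₀ + 2 * π by ring, Real.cos_add_two_pi]

lemma cutf_zero {x₀ c₁ c₂ x : ℝ} (h : c₁ < c₂) (hx : Real.cos (x - x₀) ≤ c₁) :
    cutf x₀ c₁ c₂ x = 0 := by
  unfold cutf
  apply Real.smoothTransition.zero_of_nonpos
  exact div_nonpos_of_nonpos_of_nonneg (by linarith) (by linarith)

lemma cutf_one {x₀ c₁ c₂ x : ℝ} (h : c₁ < c₂) (hx : c₂ ≤ Real.cos (x - x₀)) :
    cutf x₀ c₁ c₂ x = 1 := by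
  unfold cutf
  apply Real.smoothTransition.one_of_one_le
  rw [le_div_iff₀ (by linarith)]; linarith

lemma cutf_abs_le (x₀ c₁ c₂ x : ℝ) : |cutf x₀ c₁ c₂ x| ≤ 1 := by
  unfold cutf
  rw [abs_of_nonneg (Real.smoothTransition.nonneg _)]
  exact Real.smoothTransition.le_one _

lemma deriv_periodic {f : ℝ → ℝ} {T : ℝ} (hf : Function.Periodic f T) :
    Function.Periodic (deriv f) T := by
  intro x
  rw [← deriv_comp_add_const]
  congr 1
  ext y
  exact hf y

lemma smooth_periodic_lip {f : ℝ → ℝ} (hf : ContDiff ℝ (⊤ : ℕ∞) f)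
    (hp : Function.Periodic f (2 * π)) :
    ∃ L : ℝ, 0 ≤ L ∧ (∀ x, |deriv f x| ≤ L) ∧ ∀ x y, |f x - f y| ≤ L * |x - y| := by
  have hc : Continuous (deriv f) := hf.continuous_deriv (by exact_mod_cast le_top)
  obtain ⟨M, hM⟩ := (niceFn_of_continuous hc (deriv_periodic hp)).2.2
  refine ⟨M, (abs_nonneg _).trans (hM 0), hM, fun x y => ?_⟩
  have hd : Differentiable ℝ f := hf.differentiable (by simp)
  exact Convex.norm_image_sub_le_of_norm_deriv_le (s := Set.univ) (fun x _ => hd x)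
    (fun x _ => hM x) convex_univ (Set.mem_univ y) (Set.mem_univ x)

lemma smooth_conv_hasDerivAt {κ g : ℝ → ℝ} (hκ : ContDiff ℝ (⊤ : ℕ∞) κ)
    (hκp : Function.Periodic κ (2 * π)) (hg : NiceFn g) (x : ℝ) :
    HasDerivAt (fun x => ∫ y in (-π)..π, κ (x - y) * g y)
      (∫ y in (-π)..π, deriv κ (x - y) * g y) x := by
  obtain ⟨M, hM⟩ := hg.2.2
  have hM0 : 0 ≤ M := (abs_nonneg _).trans (hM 0)
  obtain ⟨L, hL0, hL, -⟩ := smooth_periodic_lip hκ hκp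
  have hd : Differentiable ℝ κ := hκ.differentiable (by simp)
  have hc : Continuous (deriv κ) := hκ.continuous_deriv (by exact_mod_cast le_top)
  have hgm := hg.1
  refine (intervalIntegral.hasDerivAt_integral_of_dominated_loc_of_deriv_le
    (F := fun x y => κ (x - y) * g y) (F' := fun x y => deriv κ (x - y) * g y)
    (bound := fun _ => L * M) (s := Set.univ) Filter.univ_mem ?_ ?_ ?_ ?_ ?_ ?_).2
  · refine Filter.Eventually.of_forall fun x => Measurable.aestronglyMeasurable ?_
    exact (hκ.continuous.measurable.comp (by fun_prop)).mul hgm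
  · refine mul_nice_integrable (Continuous.intervalIntegrable ?_ _ _) hgm hM
    exact hκ.continuous.comp (by fun_prop)
  · exact ((hc.measurable.comp (by fun_prop)).mul hgm).aestronglyMeasurable
  · refine Filter.Eventually.of_forall fun y _ x _ => ?_
    rw [Real.norm_eq_abs, abs_mul]
    exact mul_le_mul (hL _) (hM _) (abs_nonneg _) hL0
  · exact intervalIntegrable_const
  · refine Filter.Eventually.of_forall fun y _ x _ => ?_
    exact ((hd (x - y)).hasDerivAt.comp_sub_const x y).mul_const (g y)

lemma smooth_conv_contDiff {g : ℝ → ℝ} (hg : NiceFn g) (k : ℕ) :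
    ∀ {κ : ℝ → ℝ}, ContDiff ℝ (⊤ : ℕ∞) κ → Function.Periodic κ (2 * π) →
    ContDiff ℝ k (fun x => ∫ y in (-π)..π, κ (x - y) * g y) := by
  induction k with
  | zero =>
    intro κ hκ hκp
    have : Differentiable ℝ (fun x => ∫ y in (-π)..π, κ (x - y) * g y) :=
      fun x => (smooth_conv_hasDerivAt hκ hκp hg x).differentiableAt
    exact contDiff_zero.2 this.continuous
  | succ k ih =>
    intro κ hκ hκp
    have hd := smooth_conv_hasDerivAt hκ hκp hg
    push_cast
    rw [contDiff_succ_iff_deriv]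
    refine ⟨fun x => (hd x).differentiableAt, by simp, ?_⟩
    rw [show deriv (fun x => ∫ y in (-π)..π, κ (x - y) * g y) =
      fun x => ∫ y in (-π)..π, deriv κ (x - y) * g y from funext fun x => (hd x).deriv]
    exact ih (contDiff_infty_iff_deriv.1 hκ).2 (deriv_periodic hκp)

/-- Smoothness of the convolution away from the support. -/
lemma cv_tail_contDiffAt {α : ℝ} (hα : 0 < α) {g : ℝ → ℝ} (hg : NiceFn g) {x₀ c : ℝ}
    (hc : c < 1) (hz : ∀ y, c < Real.cos (y - x₀) → g y = 0) :
    ContDiffAt ℝ (⊤ : ℕ∞) (cv α g) x₀ := by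
  obtain ⟨d₁, hd1, hd1'⟩ := exists_between hc
  obtain ⟨d₂, hd2, hd2'⟩ := exists_between hd1'
  set κ : ℝ → ℝ := fun z => (1 - cutf 0 d₁ d₂ z) * Kker α z with hκdef
  have hκ : ContDiff ℝ (⊤ : ℕ∞) κ := by
    rw [contDiff_iff_contDiffAt]
    intro z
    by_cases h1 : Real.cos z = 1
    · have hev : ∀ᶠ w in 𝓝 z, d₂ < Real.cos w :=
        Real.continuous_cos.continuousAt.eventually (lt_mem_nhds (by rw [h1]; exact hd2'))
      refine (contDiffAt_const (c := (0:ℝ))).congr_of_eventuallyEq ?_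
      filter_upwards [hev] with w hw
      simp only [hκdef]
      rw [cutf_one hd2 (by simpa using hw.le)]; simp
    · exact (contDiffAt_const.sub (cutf_contDiff _ _ _).contDiffAt).mul (Kker_contDiffAt hα h1)
  have hκp : Function.Periodic κ (2 * π) := by
    intro z
    simp only [hκdef]
    rw [cutf_periodic, Kker_periodic]
  have hsm : ContDiff ℝ (⊤ : ℕ∞) (fun x => ∫ y in (-π)..π, κ (x - y) * g y) :=
    contDiff_infty.2 fun k => smooth_conv_contDiff hg k hκ hκp
  refine hsm.contDiffAt.congr_of_eventuallyEq ?_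
  filter_upwards [Metric.ball_mem_nhds x₀ (show 0 < d₁ - c by linarith)] with x hx
  rw [Metric.mem_ball, Real.dist_eq] at hx
  unfold cv
  congr 1
  ext y
  by_cases hy : c < Real.cos (y - x₀)
  · rw [hz y hy]; simp
  · push Not at hy
    have h1 : |Real.cos (x - y) - Real.cos (x₀ - y)| ≤ |x - x₀| := by
      have := Real.abs_cos_sub_cos_le (x - y) (x₀ - y)
      simpa using this
    have h2 : Real.cos (x₀ - y) = Real.cos (y - x₀) := by rw [← Real.cos_neg]; ring_nf
    have h3 : Real.cos (x - y) ≤ d₁ := by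
      have := (abs_le.1 h1).2
      linarith
    simp only [hκdef]
    rw [cutf_zero hd2 (by simpa using h3)]; simp

lemma niceFn_deriv {f : ℝ → ℝ} (hp : Function.Periodic f (2 * π)) {L : ℝ} (hL : 0 ≤ L)
    (hlip : ∀ x y, |f x - f y| ≤ L * |x - y|) : NiceFn (deriv f) := by
  refine ⟨measurable_deriv f, deriv_periodic hp, L, fun x => ?_⟩
  rw [← Real.norm_eq_abs]
  exact norm_deriv_le_of_lip' (f := f) (x₀ := x) hL
    (Filter.Eventually.of_forall fun y => by simpa [Real.norm_eq_abs] using hlip y x)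

lemma cv_hasDerivAt {α : ℝ} (hα : 0 < α) {f : ℝ → ℝ} (hf : NiceFn f) {L : ℝ} (hL : 0 ≤ L)
    (hlip : ∀ x y, |f x - f y| ≤ L * |x - y|) (x : ℝ) :
    HasDerivAt (cv α f) (cv α (deriv f) x) x := by
  have hnd := niceFn_deriv hf.2.1 hL hlip
  obtain ⟨M, hM⟩ := hf.2.2
  have hlip' : LipschitzWith (Real.toNNReal L) f :=
    LipschitzWith.of_dist_le_mul fun x y => by
      rw [Real.dist_eq, Real.dist_eq, Real.coe_toNNReal L hL]; exact hlip x y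
  have hfun : cv α f = fun x => ∫ z in (-π)..π, Kker α z * f (x - z) :=
    funext fun x => cv_eq hf x
  rw [hfun, cv_eq hnd]
  have hK := Kker_measurable hα
  refine (intervalIntegral.hasDerivAt_integral_of_dominated_loc_of_lip
    (F := fun x z => Kker α z * f (x - z)) (F' := fun z => Kker α z * deriv f (x - z))
    (bound := fun z => L * Kker α z) (s := Set.univ) Filter.univ_mem ?_ ?_ ?_ ?_ ?_ ?_).2
  · refine Filter.Eventually.of_forall fun x => Measurable.aestronglyMeasurable ?_
    exact hK.mul (hf.1.comp (by fun_prop))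
  · exact mul_nice_integrable (Kker_intervalIntegrable hα _ _) (hf.1.comp (by fun_prop))
      (fun z => hM _)
  · exact (hK.mul (hnd.1.comp (by fun_prop))).aestronglyMeasurable
  · refine Filter.Eventually.of_forall fun z _ => LipschitzWith.lipschitzOnWith ?_
    refine LipschitzWith.of_dist_le_mul fun x y => ?_
    rw [Real.dist_eq, Real.dist_eq, ← mul_sub, abs_mul, Real.coe_nnabs, abs_mul, abs_of_nonneg hL]
    have := hlip (x - z) (y - z)
    rw [sub_sub_sub_cancel_right] at this
    calc _ ≤ |Kker α z| * (L * |x - y|) := by gcongr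
      _ = _ := by ring
  · exact (Kker_intervalIntegrable hα _ _).const_mul L
  · have h1 : ∀ᵐ w : ℝ, DifferentiableAt ℝ f w := hlip'.ae_differentiableAt_real
    have h2 := (Measure.measurePreserving_sub_left volume x).quasiMeasurePreserving.ae h1
    filter_upwards [h2] with z hz _
    exact (hz.hasDerivAt.comp_sub_const x z).const_mul (Kker α z)

lemma exists_shift_of_cos {x x₀ ε : ℝ} (hε : 0 < ε) (hε1 : ε ≤ π)
    (h : Real.cos ε < Real.cos (x - x₀)) : ∃ k : ℤ, |x + k * (2 * π) - x₀| < ε := by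
  have hpi := Real.pi_pos
  have h2pi : (0:ℝ) < 2 * π := by positivity
  set w := toIocMod h2pi (-π) (x - x₀) with hw
  have hmem : w ∈ Set.Ioc (-π) (-π + 2 * π) := toIocMod_mem_Ioc h2pi (-π) (x - x₀)
  have heq : w = (x - x₀) - toIocDiv h2pi (-π) (x - x₀) • (2 * π) := rfl
  refine ⟨-toIocDiv h2pi (-π) (x - x₀), ?_⟩
  have he : x + ((-toIocDiv h2pi (-π) (x - x₀) : ℤ) : ℝ) * (2 * π) - x₀ = w := by
    rw [heq, zsmul_eq_mul]; push_cast; ring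
  rw [he]
  have hcos : Real.cos |w| = Real.cos (x - x₀) := by
    rw [Real.cos_abs, heq, zsmul_eq_mul, Real.cos_sub_int_mul_two_pi]
  by_contra hcon
  push Not at hcon
  have hwle : |w| ≤ π := abs_le.2 ⟨hmem.1.le, by have := hmem.2; linarith⟩
  have := Real.cos_le_cos_of_nonneg_of_le_pi hε.le hwle hcon
  linarith

/-- Localisation: differentiate the convolution near a point where `F` is Lipschitz. -/
lemma localize {α : ℝ} (hα : 0 < α) {F : ℝ → ℝ} (hFc : Continuous F)
    (hFp : Function.Periodic F (2 * π)) {x₀ ε L : ℝ} (hε : 0 < ε) (hL : 0 ≤ L)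
    (hlip : ∀ x, |x - x₀| < ε → ∀ y, |F y - F x| ≤ L * |y - x|) :
    ∃ g r : ℝ → ℝ, NiceFn g ∧ ContDiffAt ℝ (⊤ : ℕ∞) r x₀ ∧
      (∀ᶠ x in 𝓝 x₀, HasDerivAt (cv α F) (cv α g x + r x) x) ∧
      (∀ᶠ x in 𝓝 x₀, g x = deriv F x) ∧
      ((∀ x, |x - x₀| < ε → ContDiffAt ℝ 1 F x) → Continuous g) := by
  have hpi := Real.pi_pos
  set ε' := min ε 1 with hε'
  have hε'0 : 0 < ε' := lt_min hε one_pos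
  have hε'1 : ε' ≤ π := (min_le_right _ _).trans (by linarith [Real.pi_gt_three])
  set c₀ := Real.cos ε' with hc₀
  have hc₀1 : c₀ < 1 := by
    rw [hc₀, ← Real.cos_zero]
    exact Real.cos_lt_cos_of_nonneg_of_le_pi le_rfl hε'1 hε'0
  obtain ⟨c₁, h01, h11⟩ := exists_between hc₀1
  obtain ⟨c₂, h12, h21⟩ := exists_between h11
  have hFn := niceFn_of_continuous hFc hFp
  obtain ⟨M, hM⟩ := hFn.2.2
  have hM0 : 0 ≤ M := (abs_nonneg _).trans (hM 0)
  have hFz : ∀ (k : ℤ) (y : ℝ), F (y + k * (2 * π)) = F y := fun k y => by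
    simpa using hFp.int_mul k y
  have hlip' : ∀ x, c₀ < Real.cos (x - x₀) → ∀ y, |F y - F x| ≤ L * |y - x| := by
    intro x hx y
    obtain ⟨k, hk⟩ := exists_shift_of_cos hε'0 hε'1 hx
    have := hlip _ (hk.trans_le (min_le_left _ _)) (y + k * (2 * π))
    rwa [hFz, hFz, add_sub_add_right_eq_sub] at this
  set χ := cutf x₀ c₁ c₂ with hχ
  have hχs : ContDiff ℝ (⊤ : ℕ∞) χ := cutf_contDiff _ _ _
  have hχp : Function.Periodic χ (2 * π) := cutf_periodic _ _ _
  obtain ⟨Lχ, hLχ0, -, hLχ⟩ := smooth_periodic_lip hχs hχp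
  set f : ℝ → ℝ := fun x => χ x * F x with hf
  have hfc : Continuous f := hχs.continuous.mul hFc
  have hfp : Function.Periodic f (2 * π) := by
    intro x; simp only [hf]; rw [hχp, hFp]
  have hfn := niceFn_of_continuous hfc hfp
  have hfl0 : ∀ x y, c₀ < Real.cos (x - x₀) → |f x - f y| ≤ (L + Lχ * M) * |x - y| := by
    intro x y hx
    have e : f x - f y = (χ x - χ y) * F x + χ y * (F x - F y) := by simp only [hf]; ring
    rw [e]
    refine (abs_add_le _ _).trans ?_
    rw [abs_mul, abs_mul]
    have h1 := hLχ x y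
    have h2 := hlip' x hx y
    rw [abs_sub_comm, abs_sub_comm y x] at h2
    have h3 := cutf_abs_le x₀ c₁ c₂ y
    have h4 := hM x
    calc |χ x - χ y| * |F x| + |χ y| * |F x - F y|
        ≤ (Lχ * |x - y|) * M + 1 * (L * |x - y|) := by gcongr
      _ = _ := by ring
  have hflip : ∀ x y, |f x - f y| ≤ (L + Lχ * M) * |x - y| := by
    intro x y
    by_cases hx : c₀ < Real.cos (x - x₀)
    · exact hfl0 x y hx
    by_cases hy : c₀ < Real.cos (y - x₀)
    · rw [abs_sub_comm, abs_sub_comm x y]; exact hfl0 y x hy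
    · push Not at hx hy
      have e1 : f x = 0 := by simp only [hf]; rw [hχ, cutf_zero h12 (by linarith), zero_mul]
      have e2 : f y = 0 := by simp only [hf]; rw [hχ, cutf_zero h12 (by linarith), zero_mul]
      rw [e1, e2]; simp; positivity
  have hLL : 0 ≤ L + Lχ * M := by positivity
  set g := deriv f with hg
  have hgn : NiceFn g := niceFn_deriv hfp hLL hflip
  set q : ℝ → ℝ := fun x => (1 - χ x) * F x with hq
  have hqc : Continuous q := (continuous_const.sub hχs.continuous).mul hFc
  have hqp : Function.Periodic q (2 * π) := by
    intro x; simp only [hq]; rw [hχp, hFp]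
  have hqn := niceFn_of_continuous hqc hqp
  have hqs : ContDiffAt ℝ (⊤ : ℕ∞) (cv α q) x₀ := by
    refine cv_tail_contDiffAt hα hqn h21 fun y hy => ?_
    simp only [hq]; rw [hχ, cutf_one h12 hy.le]; simp
  have hsplit : cv α F = fun x => cv α f x + cv α q x := by
    ext x
    obtain ⟨Mf, hMf⟩ := hfn.2.2
    obtain ⟨Mq, hMq⟩ := hqn.2.2
    have hKx : IntervalIntegrable (fun y => Kker α (x - y)) volume (-π) π := by
      have := (Kker_intervalIntegrable hα (x - -π) (x - π)).comp_sub_left x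
      simpa using this
    unfold cv
    rw [← intervalIntegral.integral_add (mul_nice_integrable hKx hfn.1 hMf)
      (mul_nice_integrable hKx hqn.1 hMq)]
    congr 1
    ext y
    simp only [hf, hq]; ring
  have hnear : ∀ᶠ x in 𝓝 x₀, c₂ < Real.cos (x - x₀) := by
    have : ContinuousAt (fun x => Real.cos (x - x₀)) x₀ := by fun_prop
    exact this.eventually (lt_mem_nhds (by simpa using h21))
  refine ⟨g, deriv (cv α q), hgn, ?_, ?_, ?_, ?_⟩
  · exact ContDiffAt.derivWithin hqs le_rfl
  · have hev : ∀ᶠ x in 𝓝 x₀, DifferentiableAt ℝ (cv α q) x := by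
      have h1 : ContDiffAt ℝ 1 (cv α q) x₀ := hqs.of_le (by exact_mod_cast le_top)
      filter_upwards [h1.eventually (by simp)] with x hx
      exact hx.differentiableAt (by simp)
    filter_upwards [hev] with x hx
    rw [hsplit]
    exact (cv_hasDerivAt hα hfn hLL hflip x).add hx.hasDerivAt
  · filter_upwards [hnear.eventually_nhds] with x hx
    apply Filter.EventuallyEq.deriv_eq
    filter_upwards [hx] with y hy
    simp only [hf]; rw [hχ, cutf_one h12 hy.le, one_mul]
  · intro hsm
    have hf1 : ContDiff ℝ 1 f := by
      rw [contDiff_iff_contDiffAt]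
      intro x
      by_cases hx : c₀ < Real.cos (x - x₀)
      · obtain ⟨k, hk⟩ := exists_shift_of_cos hε'0 hε'1 hx
        have h1 := hsm _ (hk.trans_le (min_le_left _ _))
        have h2 : ContDiffAt ℝ 1 (fun y => F (y + k * (2 * π))) x :=
          ContDiffAt.comp x (g := F) h1 (by fun_prop)
        have h3 : (fun y => F (y + k * (2 * π))) = F := funext (hFz k)
        rw [h3] at h2
        exact (hχs.contDiffAt.of_le (by exact_mod_cast le_top)).mul h2
      · push Not at hx
        have hc : ContinuousAt (fun x => Real.cos (x - x₀)) x := by fun_prop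
        have hev : ∀ᶠ y in 𝓝 x, Real.cos (y - x₀) < c₁ :=
          hc.eventually (gt_mem_nhds (lt_of_le_of_lt hx h01))
        refine (contDiffAt_const (c := (0:ℝ))).congr_of_eventuallyEq ?_
        filter_upwards [hev] with y hy
        simp only [hf]; rw [hχ, cutf_zero h12 hy.le, zero_mul]
    exact hf1.continuous_deriv le_rfl


lemma contDiffAt_succ_of_deriv {f f' : ℝ → ℝ} {x₀ : ℝ} {k : ℕ}
    (h : ∀ᶠ x in 𝓝 x₀, HasDerivAt f (f' x) x) (hf' : ContDiffAt ℝ k f' x₀) :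
    ContDiffAt ℝ ((k + 1 : ℕ)) f x₀ := by
  push_cast
  rw [contDiffAt_succ_iff_hasFDerivAt]
  refine ⟨fun x => ContinuousLinearMap.toSpanSingleton ℝ (f' x), ⟨_, h, fun x hx => ?_⟩, ?_⟩
  · exact HasDerivAt.hasFDerivAt hx
  · exact (ContinuousLinearMap.toSpanSingletonCLE (𝕜 := ℝ) (E := ℝ)).contDiff.contDiffAt.comp x₀ hf'

def Hol (F : ℝ → ℝ) (x₀ β : ℝ) : Prop :=
  ∃ ε > 0, ∃ A ≥ 0, ∀ x, |x - x₀| < ε → ∀ y, |F y - F x| ≤ A * |y - x| ^ β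

lemma hol_of_local {F : ℝ → ℝ} {x₀ β ε δ A M : ℝ} (hM : ∀ x, |F x| ≤ M) (hβ : 0 ≤ β)
    (hε : 0 < ε) (hδ : 0 < δ) (hA : 0 ≤ A)
    (h : ∀ x y, |x - x₀| < ε → |y - x| < δ → |F y - F x| ≤ A * |y - x| ^ β) :
    ∃ A' ≥ 0, ∀ x, |x - x₀| < ε → ∀ y, |F y - F x| ≤ A' * |y - x| ^ β := by
  have hM0 : 0 ≤ M := (abs_nonneg _).trans (hM 0)
  refine ⟨A + 2 * M / δ ^ β, by positivity, fun x hx y => ?_⟩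
  have hB : 0 ≤ 2 * M / δ ^ β := by positivity
  have hP : 0 ≤ |y - x| ^ β := by positivity
  by_cases hd : |y - x| < δ
  · have := h x y hx hd
    nlinarith [mul_nonneg hB hP]
  · push Not at hd
    have h1 : |F y - F x| ≤ 2 * M := by
      have := abs_sub (F y) (F x)
      linarith [hM x, hM y]
    have h2 : δ ^ β ≤ |y - x| ^ β := Real.rpow_le_rpow hδ.le hd hβ
    have h3 : 0 < δ ^ β := by positivity
    have h4 : 2 * M ≤ 2 * M / δ ^ β * |y - x| ^ β := by
      rw [div_mul_eq_mul_div, le_div_iff₀ h3]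
      gcongr
    nlinarith [mul_nonneg hA hP]

lemma hol_step {α : ℝ} (hα : 0 < α) {b β : ℝ} (hb : 0 < b) (hb1 : 2 * b < 1) (hbα : 2 * b < α)
    (hβ : 0 ≤ β) (hβb : β + b ≤ 1) {F : ℝ → ℝ} (hF : NiceFn F) {x₀ : ℝ} {H : ℝ × ℝ → ℝ}
    (hH : ContDiffAt ℝ 1 H (x₀, cv α F x₀))
    (hFH : F =ᶠ[𝓝 x₀] fun x => H (x, cv α F x)) (hhol : Hol F x₀ β) : Hol F x₀ (β + b) := by
  obtain ⟨C, hC, hcv⟩ := cv_holder hα hb hb1 hbα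
  obtain ⟨ε, hε, A, hA, hFA⟩ := hhol
  obtain ⟨K, t, ht, hK⟩ := hH.exists_lipschitzOnWith
  obtain ⟨M, hM⟩ := hF.2.2
  have hu := cv_continuous hα hF
  have hev : ∀ᶠ x in 𝓝 x₀, (x, cv α F x) ∈ t ∧ F x = H (x, cv α F x) := by
    refine Filter.Eventually.and ?_ hFH
    have : ContinuousAt (fun x => (x, cv α F x)) x₀ := by fun_prop
    exact this ht
  obtain ⟨ρ, hρ, hball⟩ := Metric.eventually_nhds_iff.1 hev
  have hK0 : (0 : ℝ) ≤ K := K.2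
  obtain ⟨A', hA', h⟩ := hol_of_local (F := F) (x₀ := x₀) (β := β + b) (ε := min ε (ρ / 2))
    (δ := min (ρ / 2) 1) (A := K * (1 + C * A)) hM (by linarith) (by positivity) (by positivity)
    (by positivity) (by
      intro x y hx hy
      have hx1 := hx.trans_le (min_le_left _ _)
      have hx2 := hx.trans_le (min_le_right _ _)
      have hy1 := hy.trans_le (min_le_left _ _)
      have hy2 := hy.trans_le (min_le_right _ _)
      obtain ⟨hxt, hxF⟩ := hball (y := x) (by rw [Real.dist_eq]; linarith)
      obtain ⟨hyt, hyF⟩ := hball (y := y) (by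
        rw [Real.dist_eq]
        have := abs_sub_le y x x₀
        linarith)
      have h1 := hK.dist_le_mul _ hyt _ hxt
      rw [← hxF, ← hyF, Real.dist_eq, Prod.dist_eq, Real.dist_eq, Real.dist_eq] at h1
      have h2 := hcv β hβ hβb F hF A x hA (hFA x hx1) (y - x) (by linarith [Real.pi_gt_three])
      rw [add_sub_cancel] at h2
      have h3 : |y - x| ≤ |y - x| ^ (β + b) := by
        conv_lhs => rw [← Real.rpow_one |y - x|]
        rcases (abs_nonneg (y - x)).eq_or_lt with h0 | h0
        · rw [← h0, Real.zero_rpow one_ne_zero]; positivity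
        · exact Real.rpow_le_rpow_of_exponent_ge h0 hy2.le hβb
      refine h1.trans ?_
      rw [mul_assoc]
      refine mul_le_mul_of_nonneg_left ?_ hK0
      have hP : 0 ≤ |y - x| ^ (β + b) := by positivity
      have hCA : 0 ≤ C * A * |y - x| ^ (β + b) := by positivity
      refine max_le ?_ ?_ <;> dsimp only <;> nlinarith)
  exact ⟨_, by positivity, A', hA', h⟩

lemma hol_one {α : ℝ} (hα : 0 < α) {F : ℝ → ℝ} (hF : NiceFn F) {x₀ : ℝ} {H : ℝ × ℝ → ℝ}
    (hH : ContDiffAt ℝ 1 H (x₀, cv α F x₀))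
    (hFH : F =ᶠ[𝓝 x₀] fun x => H (x, cv α F x)) : Hol F x₀ 1 := by
  obtain ⟨N, hN⟩ := exists_nat_gt (max (2 / α) 2)
  have hN1 : 2 / α < N := (le_max_left _ _).trans_lt hN
  have hN2 : (2 : ℝ) < N := (le_max_right _ _).trans_lt hN
  have hN0 : (0 : ℝ) < N := by linarith
  rw [div_lt_iff₀ hα] at hN1
  have key : ∀ j : ℕ, j ≤ N → Hol F x₀ (j / N) := by
    intro j
    induction j with
    | zero =>
      intro _
      obtain ⟨M, hM⟩ := hF.2.2
      refine ⟨1, one_pos, 2 * M, by linarith [(abs_nonneg _).trans (hM 0)], fun x _ y => ?_⟩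
      have := abs_sub (F y) (F x)
      simp
      linarith [hM x, hM y]
    | succ j ih =>
      intro hj
      have h1 := hol_step hα (b := 1 / N) (β := j / N) (by positivity)
        (by rw [mul_one_div, div_lt_one hN0]; exact hN2)
        (by rw [mul_one_div, div_lt_iff₀ hN0]; linarith) (by positivity)
        (by
          rw [← add_div, div_le_one hN0]
          exact_mod_cast hj) hF hH hFH (ih (by omega))
      rw [← add_div] at h1
      exact_mod_cast h1
  have := key N le_rfl
  rwa [div_self hN0.ne'] at this

lemma base_regularity {α : ℝ} (hα : 0 < α) {F : ℝ → ℝ} (hFc : Continuous F)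
    (hFp : Function.Periodic F (2 * π)) {x₀ : ℝ} {H : ℝ × ℝ → ℝ}
    (hH : ContDiffAt ℝ 1 H (x₀, cv α F x₀))
    (hFH : F =ᶠ[𝓝 x₀] fun x => H (x, cv α F x)) : ContDiffAt ℝ 1 F x₀ := by
  obtain ⟨ε, hε, A, hA, h⟩ := hol_one hα (niceFn_of_continuous hFc hFp) hH hFH
  simp only [Real.rpow_one] at h
  obtain ⟨g, r, hg, hr, hd, -, -⟩ := localize hα hFc hFp hε hA h
  have hu : ContDiffAt ℝ ((0 + 1 : ℕ)) (cv α F) x₀ := by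
    refine contDiffAt_succ_of_deriv hd (ContDiffAt.add ?_ (hr.of_le (by simp)))
    exact (contDiff_zero.2 (cv_continuous hα hg)).contDiffAt
  have hu1 : ContDiffAt ℝ 1 (cv α F) x₀ := by simpa using hu
  refine ContDiffAt.congr_of_eventuallyEq ?_ hFH
  exact ContDiffAt.comp (f := fun x => (x, cv α F x)) x₀ hH (contDiffAt_id.prodMk hu1)

lemma localize_c1 {α : ℝ} (hα : 0 < α) {F : ℝ → ℝ} (hFc : Continuous F)
    (hFp : Function.Periodic F (2 * π)) {x₀ : ℝ} (hF1 : ContDiffAt ℝ 1 F x₀) :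
    ∃ g r : ℝ → ℝ, Continuous g ∧ Function.Periodic g (2 * π) ∧ ContDiffAt ℝ (⊤ : ℕ∞) r x₀ ∧
      (∀ᶠ x in 𝓝 x₀, HasDerivAt (cv α F) (cv α g x + r x) x) ∧
      (∀ᶠ x in 𝓝 x₀, HasDerivAt F (g x) x) := by
  obtain ⟨K, t, ht, hK⟩ := hF1.exists_lipschitzOnWith
  have hev := hF1.eventually (by simp)
  obtain ⟨ρ, hρ, hball⟩ := Metric.eventually_nhds_iff.1 (hev.and ht)
  obtain ⟨M, hM⟩ := (niceFn_of_continuous hFc hFp).2.2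
  obtain ⟨A, hA, h⟩ := hol_of_local (F := F) (x₀ := x₀) (β := 1) (ε := ρ / 2)
    (δ := ρ / 2) (A := K) hM (by norm_num) (by positivity) (by positivity) K.2 (by
      intro x y hx hy
      have hxt := (hball (y := x) (by rw [Real.dist_eq]; linarith)).2
      have hyt := (hball (y := y) (by
        rw [Real.dist_eq]
        have := abs_sub_le y x x₀
        linarith)).2
      have h1 := hK.dist_le_mul _ hyt _ hxt
      rwa [Real.dist_eq, Real.dist_eq, ← Real.rpow_one |y - x|] at h1)
  simp only [Real.rpow_one] at h
  obtain ⟨g, r, hg, hr, hd, hgd, hgc⟩ := localize hα hFc hFp (half_pos hρ) hA h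
  refine ⟨g, r, hgc fun x hx => (hball (y := x) (by rw [Real.dist_eq]; linarith)).1, hg.2.1, hr,
    hd, ?_⟩
  filter_upwards [hgd, hev] with x hx hx1
  rw [hx]
  exact (hx1.differentiableAt one_ne_zero).hasDerivAt

lemma linear_claim {α : ℝ} (hα : 0 < α) (x₀ : ℝ) (k : ℕ) : ∀ F : ℝ → ℝ, Continuous F →
    Function.Periodic F (2 * π) → ∀ a r : ℝ → ℝ, ContDiffAt ℝ ((k + 1 : ℕ)) a x₀ →
    ContDiffAt ℝ ((k + 1 : ℕ)) r x₀ → a x₀ ≠ 0 →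
    (∀ᶠ x in 𝓝 x₀, a x * F x = cv α F x + r x) → ContDiffAt ℝ ((k + 1 : ℕ)) F x₀ := by
  induction k with
  | zero =>
    intro F hFc hFp a r ha hr ha0 heq
    have ha1 : ContDiffAt ℝ 1 a x₀ := by simpa using ha
    have hr1 : ContDiffAt ℝ 1 r x₀ := by simpa using hr
    have := base_regularity hα hFc hFp (x₀ := x₀) (H := fun q => (q.2 + r q.1) / a q.1) (by
      have h1 : ContDiffAt ℝ 1 (fun q : ℝ × ℝ => r q.1) (x₀, cv α F x₀) :=
        ContDiffAt.comp (g := r) (f := Prod.fst) _ hr1 contDiffAt_fst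
      have h2 : ContDiffAt ℝ 1 (fun q : ℝ × ℝ => a q.1) (x₀, cv α F x₀) :=
        ContDiffAt.comp (g := a) (f := Prod.fst) _ ha1 contDiffAt_fst
      exact (contDiffAt_snd.add h1).div h2 ha0) (by
      filter_upwards [heq, ha1.continuousAt.eventually_ne ha0] with x hx hx0
      rw [← hx]; field_simp)
    simpa using this
  | succ k ih =>
    intro F hFc hFp a r ha hr ha0 heq
    have hle : (((k + 1 : ℕ)) : WithTop ℕ∞) ≤ ((k + 1 + 1 : ℕ)) := by
      exact_mod_cast Nat.le_succ _
    have hle1 : (1 : WithTop ℕ∞) ≤ ((k + 1 : ℕ)) := by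
      exact_mod_cast Nat.succ_le_succ (Nat.zero_le _)
    have hFk := ih F hFc hFp a r (ha.of_le hle) (hr.of_le hle) ha0 heq
    obtain ⟨g, r₂, hgc, hgp, hr₂, hd, hFg⟩ := localize_c1 hα hFc hFp (hFk.of_le hle1)
    have had : ContDiffAt ℝ ((k + 1 : ℕ)) (deriv a) x₀ := ha.derivWithin (by push_cast; rfl)
    have hrd : ContDiffAt ℝ ((k + 1 : ℕ)) (deriv r) x₀ := hr.derivWithin (by push_cast; rfl)
    have hae := (ha.of_le (hle1.trans hle)).eventually (by simp)
    have hre := (hr.of_le (hle1.trans hle)).eventually (by simp)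
    refine contDiffAt_succ_of_deriv hFg (ih g hgc hgp a
      (fun x => r₂ x + deriv r x - deriv a x * F x) (ha.of_le hle) ?_ ha0 ?_)
    · exact ((hr₂.of_le (by exact_mod_cast le_top)).add hrd).sub (had.mul hFk)
    · filter_upwards [heq.eventually_nhds, hd, hFg, hae, hre] with x h1 h2 h3 h4 h5
      have e1 := ((h4.differentiableAt one_ne_zero).hasDerivAt).mul h3
      have e2 := h2.add ((h5.differentiableAt one_ne_zero).hasDerivAt)
      have e3 := e2.congr_of_eventuallyEq (f₁ := a * F) h1
      have := e1.unique e3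
      linarith

lemma main_abstract {α c κ : ℝ} (hα : 0 < α) {n φ : ℝ → ℝ} (hc : Continuous φ)
    (hp : Function.Periodic φ (2 * π)) {U : Set ℝ} (hU : IsOpen U)
    (hn : ∀ x ∈ U, ContDiffAt ℝ (⊤ : ℕ∞) n (φ x)) (hlt : ∀ x ∈ U, deriv n (φ x) < c)
    (heq : ∀ x, cv α φ x = c * φ x - n (φ x) + κ) : ContDiffOn ℝ (⊤ : ℕ∞) φ U := by
  have key : ∀ k : ℕ, ∀ x₀ ∈ U, ContDiffAt ℝ ((k + 1 : ℕ)) φ x₀ := by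
    intro k
    induction k with
    | zero =>
      intro x₀ hx₀
      set G : ℝ → ℝ := fun s => c * s - n s + κ with hG
      have hnc := hn x₀ hx₀
      have hG1 : ContDiffAt ℝ 1 G (φ x₀) :=
        ((contDiffAt_const.mul contDiffAt_id).sub (hnc.of_le (by exact_mod_cast le_top))).add
          contDiffAt_const
      have hnd : HasDerivAt n (deriv n (φ x₀)) (φ x₀) :=
        (hnc.differentiableAt (by simp)).hasDerivAt
      have hGd : HasDerivAt G (c - deriv n (φ x₀)) (φ x₀) := by
        have h := (((hasDerivAt_id (φ x₀)).const_mul c).sub hnd).add_const κ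
        rw [mul_one] at h
        exact h
      have hne : c - deriv n (φ x₀) ≠ 0 := by linarith [hlt x₀ hx₀]
      have hGf := hGd.hasFDerivAt_equiv hne
      have hs := hG1.to_localInverse hGf one_ne_zero
      have hleft := (hG1.hasStrictFDerivAt' hGf one_ne_zero).eventually_left_inverse
      have hux : G (φ x₀) = cv α φ x₀ := (heq x₀).symm
      rw [hux] at hs
      have := base_regularity hα hc hp (x₀ := x₀)
        (H := fun q => hG1.localInverse hGf one_ne_zero q.2)
        (ContDiffAt.comp (f := Prod.snd) _ hs contDiffAt_snd) (by
          filter_upwards [hc.continuousAt.eventually hleft] with x hx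
          rw [heq x]; exact hx.symm)
      simpa using this
    | succ k ih =>
      intro x₀ hx₀
      have hle1 : (1 : WithTop ℕ∞) ≤ ((k + 1 : ℕ)) := by
        exact_mod_cast Nat.succ_le_succ (Nat.zero_le _)
      have hφk := ih x₀ hx₀
      obtain ⟨g, r, hgc, hgp, hr, hd, hFg⟩ := localize_c1 hα hc hp (hφk.of_le hle1)
      have hnd : ContDiffAt ℝ ((k + 1 : ℕ)) (deriv n) (φ x₀) :=
        (hn x₀ hx₀).derivWithin (by exact_mod_cast le_top)
      refine contDiffAt_succ_of_deriv hFg (linear_claim hα x₀ k g hgc hgp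
        (fun x => c - deriv n (φ x)) r ?_ (hr.of_le (by exact_mod_cast le_top)) ?_ ?_)
      · exact contDiffAt_const.sub (ContDiffAt.comp x₀ hnd hφk)
      · have := hlt x₀ hx₀
        exact (sub_pos.2 this).ne'
      · filter_upwards [hd, hFg, hU.mem_nhds hx₀] with x h2 h3 hxU
        have e0 : HasDerivAt n (deriv n (φ x)) (φ x) :=
          ((hn x hxU).differentiableAt (by simp)).hasDerivAt
        have e1 := ((h3.const_mul c).sub (e0.comp x h3)).add_const κ
        have e3 := e1.congr_of_eventuallyEq (f₁ := cv α φ) (Filter.Eventually.of_forall heq)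
        have := e3.unique h2
        linarith
  intro x hx
  refine ContDiffAt.contDiffWithinAt ?_
  refine contDiffAt_infty.2 fun k => (key k x hx).of_le ?_
  exact_mod_cast Nat.le_succ _

lemma nAbs_contDiffAt {p s : ℝ} (hs : s ≠ 0) : ContDiffAt ℝ (⊤ : ℕ∞) (nAbs p) s :=
  (contDiffAt_abs hs).rpow_const_of_ne (abs_ne_zero.2 hs)

lemma nSgn_contDiffAt {p s : ℝ} (hs : s ≠ 0) : ContDiffAt ℝ (⊤ : ℕ∞) (nSgn p) s :=
  contDiffAt_id.mul ((contDiffAt_abs hs).rpow_const_of_ne (abs_ne_zero.2 hs))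

lemma abs_rpow_hasDerivAt {p s : ℝ} (hs : s ≠ 0) :
    HasDerivAt (fun x : ℝ => |x| ^ p) (p * s * |s| ^ (p - 2)) s := by
  have h := (hasDerivAt_abs hs).rpow_const (p := p) (Or.inl (abs_ne_zero.2 hs))
  convert h using 1
  have h0 : 0 < |s| := abs_pos.2 hs
  have h1 : |s| ^ (p - 1) = |s| ^ (p - 2) * |s| := by
    rw [show p - 1 = (p - 2) + 1 by ring, Real.rpow_add_one h0.ne']
  rw [h1]
  have h2 : (SignType.sign s : ℝ) * |s| = s := sign_mul_abs s
  linear_combination (-(p * |s| ^ (p - 2))) * h2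

lemma nAbs_hasDerivAt {p s : ℝ} (hs : s ≠ 0) : HasDerivAt (nAbs p) (nAbs' p s) s :=
  abs_rpow_hasDerivAt hs

lemma nSgn_hasDerivAt {p s : ℝ} (hs : s ≠ 0) : HasDerivAt (nSgn p) (nSgn' p s) s := by
  have h := (hasDerivAt_id s).mul (abs_rpow_hasDerivAt (p := p - 1) hs)
  have h0 : 0 < |s| := abs_pos.2 hs
  have h1 : |s| ^ (p - 1) = |s| ^ (p - 1 - 2) * (s * s) := by
    rw [← abs_mul_abs_self s, ← mul_assoc, ← Real.rpow_add_one h0.ne', ← Real.rpow_add_one h0.ne']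
    congr 1; ring
  have h2 : nSgn' p s = 1 * |s| ^ (p - 1) + id s * ((p - 1) * s * |s| ^ (p - 1 - 2)) := by
    show p * |s| ^ (p - 1) = 1 * |s| ^ (p - 1) + s * ((p - 1) * s * |s| ^ (p - 1 - 2))
    rw [h1]; ring
  rw [h2]
  exact h

/-- Smoothness of steady solutions on open sets where `n′(φ) < c`:
(i) if moreover `φ` does not vanish on `U`, then `φ` is smooth on `U`;
(ii) if `n(x) = x^p` for an integer `p ≥ 2`, then `φ` is smooth on `U` without the
nonvanishing assumption. -/
theorem statement11 (α p c : ℝ) (hα : α ∈ Set.Ioo (0:ℝ) 1) (hp : 1 < p) (hc : 0 < c)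
    (n n' : ℝ → ℝ)
    (hn : (n = nAbs p ∧ n' = nAbs' p) ∨ (n = nSgn p ∧ n' = nSgn' p))
    (φ : ℝ → ℝ) (hφ : IsSteadySolution α c n φ)
    (U : Set ℝ) (hU : IsOpen U) (hlt : ∀ x ∈ U, n' (φ x) < c) :
    ((∀ x ∈ U, φ x ≠ 0) → ContDiffOn ℝ (⊤ : ℕ∞) φ U) ∧
    ((∃ m : ℕ, 2 ≤ m ∧ p = (m : ℝ) ∧ ∀ x : ℝ, n x = x ^ m) → ContDiffOn ℝ (⊤ : ℕ∞) φ U) := by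
  obtain ⟨hc1, hc2, -, heq⟩ := hφ
  have hcont : ∀ s : ℝ, s ≠ 0 → ContDiffAt ℝ (⊤ : ℕ∞) n s ∧ HasDerivAt n (n' s) s := by
    intro s hs
    rcases hn with ⟨rfl, rfl⟩ | ⟨rfl, rfl⟩
    · exact ⟨nAbs_contDiffAt hs, nAbs_hasDerivAt hs⟩
    · exact ⟨nSgn_contDiffAt hs, nSgn_hasDerivAt hs⟩
  have h0 : n' 0 = 0 := by
    rcases hn with ⟨rfl, rfl⟩ | ⟨rfl, rfl⟩
    · simp [nAbs']
    · have : p - 1 ≠ 0 := by linarith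
      simp [nSgn', Real.zero_rpow this]
  constructor
  · intro hne
    refine main_abstract hα.1 hc1 hc2 hU (fun x hx => (hcont _ (hne x hx)).1) (fun x hx => ?_) heq
    rw [(hcont _ (hne x hx)).2.deriv]
    exact hlt x hx
  · rintro ⟨m, hm, -, hpow⟩
    have hnm : n = fun x => x ^ m := funext hpow
    refine main_abstract hα.1 hc1 hc2 hU (fun x hx => ?_) (fun x hx => ?_) heq
    · rw [hnm]; exact (contDiff_id.pow m).contDiffAt
    · by_cases hz : φ x = 0
      · have h1 := hlt x hx
        rw [hz] at h1 ⊢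
        rw [h0] at h1
        rw [hnm]
        have hm1 : m - 1 ≠ 0 := by omega
        simpa [hm1] using h1
      · rw [(hcont _ hz).2.deriv]
        exact hlt x hx
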